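/- arXiv:2602.08044 — 4 statements merged into one kernel-verified Lean document; each statement's English description precedes it below -/
import Mathlib

section
/- Let ν > 0, ξ > 0 and a ∈ (−1, 0). Then the function K : [0,∞) → ℝ defined by K(x) = M(a, 1+ν, ξx²) satisfies K'(x) < 0 for every x > 0 and K''(x) < 0 for every x ≥ 0; in particular K is strictly decreasing on [0,∞) and strictly concave on [0,∞). -/
open MeasureTheory Real Set

/-- Pochhammer symbol (rising factorial) `(c)_k = c (c+1) ⋯ (c+k−1)`. -/
noncomputable def poch (c : ℝ) (k : ℕ) : ℝ := (ascPochhammer ℝ k).eval c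

/-- Kummer's confluent hypergeometric function
`M(a,b,z) = ∑_{k=0}^∞ ((a)_k / ((b)_k · k!)) z^k`. -/
noncomputable def kummerM (a b z : ℝ) : ℝ :=
  ∑' k : ℕ, poch a k / (poch b k * (Nat.factorial k : ℝ)) * z ^ k

/-!
Termwise differentiation of the series gives `d/dz M(a, b, z) = (a / b) M(a + 1, b + 1, z)`, hence
for `K(x) = M(a, b, ξ x²)`

`K'(x) = 2ξ (a / b) x M(a + 1, b + 1, ξx²)`,
`K''(x) = 2ξ (a / b) (M(a + 1, b + 1, ξx²) + 2ξ ((a + 1) / (b + 1)) x² M(a + 2, b + 2, ξx²))`.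

As `-1 ≤ a < 0 < b`, the prefactor `a / b` is negative, while the shifted functions have nonnegative
coefficients and constant term `1`, so they are positive on `[0, ∞)`.
-/

open Filter FormalMultilinearSeries
open scoped Topology

theorem hasDerivAt_ofScalarsSum {𝕜 : Type*} [NontriviallyNormedField 𝕜] [CompleteSpace 𝕜]
    {c : ℕ → 𝕜} {x : 𝕜} (hx : ‖x‖ₑ < (ofScalars 𝕜 c).radius) :
    HasDerivAt (ofScalarsSum c) (ofScalarsSum (fun n ↦ (n + 1) * c (n + 1)) x) x := by
  set p := ofScalars 𝕜 c
  have hsum : Summable fun n ↦ p.derivSeries n fun _ ↦ x :=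
    p.derivSeries.summable <| Metric.mem_eball.2 <| by
      simpa [edist_zero_right] using hx.trans_le p.radius_le_radius_derivSeries
  refine (p.hasFDerivAt_sum hx).hasDerivAt.congr_deriv ?_
  calc p.derivSeries.sum x 1
      = ∑' n, p.derivSeries n (fun _ ↦ x) 1 :=
        (ContinuousLinearMap.apply 𝕜 𝕜 (1 : 𝕜)).map_tsum hsum
    _ = ofScalarsSum (fun n ↦ (n + 1) * c (n + 1)) x := by
        rw [ofScalars_sum_eq]
        refine tsum_congr fun n ↦ ?_
        rw [apply_eq_pow_smul_coeff, _root_.smul_apply, derivSeries_coeff_one,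
          coeff_ofScalars]
        simp [mul_comm]

theorem poch_zero (c : ℝ) : poch c 0 = 1 := by simp [poch]

theorem poch_succ_right (c : ℝ) (k : ℕ) : poch c (k + 1) = poch c k * (c + k) :=
  ascPochhammer_succ_eval k c

theorem poch_succ_left (c : ℝ) (k : ℕ) : poch c (k + 1) = c * poch (c + 1) k := by
  simp [poch, ascPochhammer_succ_left, Polynomial.eval_comp]

theorem poch_nonneg {c : ℝ} (hc : 0 ≤ c) (k : ℕ) : 0 ≤ poch c k := by
  induction k with
  | zero => simp [poch_zero]
  | succ k ih => rw [poch_succ_right]; positivity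

/-- The coefficient `(a)_k / ((b)_k k!)` of `z ^ k` in `M(a, b, z)`. If `b = -m` with `m : ℕ`, the
coefficients with `k > m` are `0`, by division by zero. -/
noncomputable def kummerCoeff (a b : ℝ) (k : ℕ) : ℝ := poch a k / (poch b k * k.factorial)

section Coeff

variable (a b : ℝ)

theorem kummerCoeff_zero : kummerCoeff a b 0 = 1 := by simp [kummerCoeff, poch_zero]

theorem kummerCoeff_succ (k : ℕ) :
    kummerCoeff a b (k + 1) = kummerCoeff a b k * ((a + k) / (b + k) * (1 / (k + 1))) := by
  simp only [kummerCoeff, poch_succ_right, Nat.factorial_succ]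
  rw [div_mul_div_comm, div_mul_div_comm, mul_one]
  push_cast
  congr 1
  ring

theorem succ_mul_kummerCoeff_succ (k : ℕ) :
    (k + 1) * kummerCoeff a b (k + 1) = a / b * kummerCoeff (a + 1) (b + 1) k := by
  have hk : (k + 1 : ℝ) ≠ 0 := by positivity
  simp only [kummerCoeff, poch_succ_left, Nat.factorial_succ]
  push_cast
  field_simp

variable {a b} in
theorem kummerCoeff_nonneg (ha : 0 ≤ a) (hb : 0 < b) (k : ℕ) : 0 ≤ kummerCoeff a b k :=
  div_nonneg (poch_nonneg ha k) (mul_nonneg (poch_nonneg hb.le k) k.factorial.cast_nonneg)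

theorem summable_kummerCoeff_mul_pow (z : ℝ) : Summable fun k ↦ kummerCoeff a b k * z ^ k := by
  have hquot : Tendsto (fun k : ℕ ↦ (a + k) / (b + k)) atTop (𝓝 1) := by
    simpa using tendsto_add_mul_div_add_mul_atTop_nhds a b 1 one_ne_zero
  have hratio : Tendsto (fun k : ℕ ↦ |(a + k) / (b + k) * (1 / (k + 1)) * z|) atTop (𝓝 0) := by
    simpa using ((hquot.mul tendsto_one_div_add_atTop_nhds_zero_nat).mul_const z).abs
  refine summable_of_ratio_norm_eventually_le (r := 1 / 2) (by norm_num) ?_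
  filter_upwards [hratio.eventually_le_const (by norm_num : (0 : ℝ) < 1 / 2)] with k hk
  calc ‖kummerCoeff a b (k + 1) * z ^ (k + 1)‖
      = |(a + k) / (b + k) * (1 / (k + 1)) * z| * ‖kummerCoeff a b k * z ^ k‖ := by
        rw [kummerCoeff_succ, Real.norm_eq_abs, Real.norm_eq_abs, ← abs_mul]
        ring_nf
    _ ≤ 1 / 2 * ‖kummerCoeff a b k * z ^ k‖ := by gcongr

theorem radius_ofScalars_kummerCoeff : (ofScalars ℝ (kummerCoeff a b)).radius = ⊤ :=
  radius_eq_top_of_summable_norm _ fun r ↦ by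
    simpa [ofScalars_norm] using (summable_kummerCoeff_mul_pow a b r).norm

end Coeff

theorem kummerM_eq_ofScalarsSum (a b : ℝ) : kummerM a b = ofScalarsSum (kummerCoeff a b) := by
  ext z
  simp [kummerM, kummerCoeff, ofScalars_sum_eq]

theorem hasDerivAt_kummerM (a b z : ℝ) :
    HasDerivAt (kummerM a b) (a / b * kummerM (a + 1) (b + 1) z) z := by
  have hz : ‖z‖ₑ < (ofScalars ℝ (kummerCoeff a b)).radius := by
    simp [radius_ofScalars_kummerCoeff]
  rw [kummerM_eq_ofScalarsSum a b]
  refine (hasDerivAt_ofScalarsSum hz).congr_deriv ?_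
  simp only [kummerM_eq_ofScalarsSum, ofScalars_sum_eq, succ_mul_kummerCoeff_succ, smul_eq_mul,
    mul_assoc, tsum_mul_left]

theorem kummerM_pos {a b z : ℝ} (ha : 0 ≤ a) (hb : 0 < b) (hz : 0 ≤ z) : 0 < kummerM a b z :=
  (summable_kummerCoeff_mul_pow a b z).tsum_pos
    (fun k ↦ mul_nonneg (kummerCoeff_nonneg ha hb k) (pow_nonneg hz k)) 0
    (by simp [kummerCoeff_zero])

theorem hasDerivAt_kummerM_mul_sq (a b ξ x : ℝ) :
    HasDerivAt (fun y ↦ kummerM a b (ξ * y ^ 2))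
      (2 * ξ * (a / b) * (x * kummerM (a + 1) (b + 1) (ξ * x ^ 2))) x := by
  have hsq : HasDerivAt (fun y ↦ ξ * y ^ 2) (ξ * (2 * x)) x := by
    simpa using (hasDerivAt_pow 2 x).const_mul ξ
  refine ((hasDerivAt_kummerM a b (ξ * x ^ 2)).comp x hsq).congr_deriv ?_
  ring

theorem deriv_kummerM_mul_sq (a b ξ : ℝ) :
    deriv (fun y ↦ kummerM a b (ξ * y ^ 2)) =
      fun x ↦ 2 * ξ * (a / b) * (x * kummerM (a + 1) (b + 1) (ξ * x ^ 2)) :=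
  funext fun x ↦ (hasDerivAt_kummerM_mul_sq a b ξ x).deriv

theorem deriv_deriv_kummerM_mul_sq (a b ξ x : ℝ) :
    deriv (deriv fun y ↦ kummerM a b (ξ * y ^ 2)) x =
      2 * ξ * (a / b) * (kummerM (a + 1) (b + 1) (ξ * x ^ 2) +
        2 * ξ * ((a + 1) / (b + 1)) * x ^ 2 *
          kummerM (a + 1 + 1) (b + 1 + 1) (ξ * x ^ 2)) := by
  rw [deriv_kummerM_mul_sq]
  have hK' := ((hasDerivAt_id' x).mul
    (hasDerivAt_kummerM_mul_sq (a + 1) (b + 1) ξ x)).const_mul (2 * ξ * (a / b))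
  exact hK'.deriv.trans (by ring)

section Sign

variable {a b ξ : ℝ}

theorem deriv_kummerM_mul_sq_neg (ha : a ∈ Ico (-1) 0) (hb : 0 < b) (hξ : 0 < ξ) {x : ℝ}
    (hx : 0 < x) : deriv (fun y ↦ kummerM a b (ξ * y ^ 2)) x < 0 := by
  have hprefactor : 2 * ξ * (a / b) < 0 :=
    mul_neg_of_pos_of_neg (by positivity) (div_neg_of_neg_of_pos ha.2 hb)
  have hM : 0 < kummerM (a + 1) (b + 1) (ξ * x ^ 2) :=
    kummerM_pos (by linarith [ha.1]) (by positivity) (by positivity)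
  rw [deriv_kummerM_mul_sq]
  exact mul_neg_of_neg_of_pos hprefactor (by positivity)

theorem deriv_deriv_kummerM_mul_sq_neg (ha : a ∈ Ico (-1) 0) (hb : 0 < b) (hξ : 0 < ξ) (x : ℝ) :
    deriv (deriv fun y ↦ kummerM a b (ξ * y ^ 2)) x < 0 := by
  have hprefactor : 2 * ξ * (a / b) < 0 :=
    mul_neg_of_pos_of_neg (by positivity) (div_neg_of_neg_of_pos ha.2 hb)
  have ha1 : 0 ≤ a + 1 := by linarith [ha.1]
  have hM1 : 0 < kummerM (a + 1) (b + 1) (ξ * x ^ 2) :=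
    kummerM_pos ha1 (by positivity) (by positivity)
  have hM2 : 0 < kummerM (a + 1 + 1) (b + 1 + 1) (ξ * x ^ 2) :=
    kummerM_pos (by positivity) (by positivity) (by positivity)
  rw [deriv_deriv_kummerM_mul_sq]
  exact mul_neg_of_neg_of_pos hprefactor (by positivity)

end Sign

theorem kummer_decreasing_strictly_concave_general {a b ξ : ℝ} (ha : a ∈ Ico (-1) 0) (hb : 0 < b)
    (hξ : 0 < ξ) :
    (∀ x : ℝ, 0 < x → deriv (fun y ↦ kummerM a b (ξ * y ^ 2)) x < 0) ∧
    (∀ x : ℝ, deriv (deriv fun y ↦ kummerM a b (ξ * y ^ 2)) x < 0) ∧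
    StrictAntiOn (fun y ↦ kummerM a b (ξ * y ^ 2)) (Ici 0) ∧
    StrictConcaveOn ℝ univ (fun y ↦ kummerM a b (ξ * y ^ 2)) := by
  have hcont : Continuous fun y ↦ kummerM a b (ξ * y ^ 2) :=
    continuous_iff_continuousAt.2 fun x ↦ (hasDerivAt_kummerM_mul_sq a b ξ x).continuousAt
  refine ⟨fun x ↦ deriv_kummerM_mul_sq_neg ha hb hξ, deriv_deriv_kummerM_mul_sq_neg ha hb hξ,
    strictAntiOn_of_deriv_neg (convex_Ici 0) hcont.continuousOn fun x hx ↦ ?_,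
    strictConcaveOn_univ_of_deriv2_neg hcont (deriv_deriv_kummerM_mul_sq_neg ha hb hξ)⟩
  exact deriv_kummerM_mul_sq_neg ha hb hξ (by simpa using hx)

/-- Let `ν > 0`, `ξ > 0` and `a ∈ (−1,0)`. The function `K(x) = M(a, 1+ν, ξ x²)`
satisfies `K'(x) < 0` for `x > 0` and `K''(x) < 0` for `x ≥ 0`; in particular `K`
is strictly decreasing on `[0,∞)` and strictly concave on `[0,∞)`. -/
theorem kummer_decreasing_strictly_concave (ν ξ a : ℝ) (hν : 0 < ν) (hξ : 0 < ξ)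
    (ha : a ∈ Set.Ioo (-1 : ℝ) 0) :
    (∀ x : ℝ, 0 < x → deriv (fun y : ℝ => kummerM a (1 + ν) (ξ * y ^ 2)) x < 0) ∧
    (∀ x : ℝ, 0 ≤ x → deriv (deriv (fun y : ℝ => kummerM a (1 + ν) (ξ * y ^ 2))) x < 0) ∧
    StrictAntiOn (fun y : ℝ => kummerM a (1 + ν) (ξ * y ^ 2)) (Set.Ici 0) ∧
    StrictConcaveOn ℝ (Set.Ici 0) (fun y : ℝ => kummerM a (1 + ν) (ξ * y ^ 2)) := by
  obtain ⟨hK', hK'', hanti, hconcave⟩ := kummer_decreasing_strictly_concave_general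
    (Ioo_subset_Ico_self ha) (add_pos one_pos hν) hξ
  exact ⟨hK', fun x _ ↦ hK'' x, hanti, hconcave.subset (subset_univ _) (convex_Ici 0)⟩
end

section
/- Let ν > 0, ξ > 0 and j, k ∈ ℕ. Then ∫₀^∞ Φ_{ξ,k}(x) Φ_{ξ,j}(x) dx = 1 if j = k, and ∫₀^∞ Φ_{ξ,k}(x) Φ_{ξ,j}(x) dx = 0 if j ≠ k; in particular the family (Φ_{ξ,k})_{k∈ℕ} is orthonormal in L²((0,∞)). -/
open MeasureTheory Real Set

/-- Generalized Laguerre polynomial `L_k^{(ν)}(x) = ((1+ν)_k / k!) · M(−k, 1+ν, x)`. -/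
noncomputable def laguerreL (ν : ℝ) (k : ℕ) (x : ℝ) : ℝ :=
  poch (1 + ν) k / (Nat.factorial k : ℝ) * kummerM (-(k : ℝ)) (1 + ν) x

/-- The normalized eigenfunctions
`Φ_{ξ,k}(x) = √(2ξ^{1+ν}/Γ(1+ν)) √(k!/(1+ν)_k) e^{−ξx²/2} x^{1/2+ν} L_k^{(ν)}(ξx²)`. -/
noncomputable def PhiFun (ν ξ : ℝ) (k : ℕ) (x : ℝ) : ℝ :=
  Real.sqrt (2 * ξ ^ (1 + ν) / Real.Gamma (1 + ν)) *
    Real.sqrt ((Nat.factorial k : ℝ) / poch (1 + ν) k) *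
    Real.exp (-ξ * x ^ 2 / 2) * x ^ ((1 : ℝ) / 2 + ν) * laguerreL ν k (ξ * x ^ 2)

/-!
The substitution `y = ξ x²` turns the orthonormality of the `Φ_{ξ,k}` into the orthogonality of the
Laguerre polynomials for the weight `e^{-y} y^ν` on `(0, ∞)`, whose `n`-th moment is `Γ(1 + ν + n)`.
Since `Γ(1 + ν + m + n) = (1 + ν + m)_n (1 + ν)_m Γ(1 + ν)`, integrating `y ^ n` against
`L_k^{(ν)}` gives, up to a constant, the sum `∑ₘ (-1)^m (k choose m) (1 + ν + m)_n`. This is a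
`k`-th finite difference of a monic polynomial of degree `n`, so it vanishes for `n < k` and is
`(-1)^k k!` for `n = k`.
-/

open Polynomial in
theorem sum_range_neg_one_pow_mul_choose_mul_eval_add {R : Type*} [CommRing R] {P : R[X]} {k : ℕ}
    (hP : P.natDegree ≤ k) (x : R) :
    ∑ m ∈ Finset.range (k + 1), (-1) ^ m * (k.choose m : R) * P.eval (x + m)
      = (-1) ^ k * k.factorial * P.coeff k := by
  have sum_eq_fwdDiff : ∑ m ∈ Finset.range (k + 1), (-1) ^ m * (k.choose m : R) * P.eval (x + m)
      = (-1) ^ k * (fwdDiff (1 : R))^[k] P.eval x := by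
    rw [fwdDiff_iter_eq_sum_shift, Finset.mul_sum]
    refine Finset.sum_congr rfl fun m hm ↦ ?_
    have sign_eq : (-1 : R) ^ m = (-1) ^ k * (-1) ^ (k - m) := by
      obtain ⟨d, rfl⟩ := Nat.exists_eq_add_of_le (Finset.mem_range_succ_iff.mp hm)
      rw [Nat.add_sub_cancel_left, pow_add, mul_assoc, ← mul_pow, neg_one_mul, neg_neg, one_pow,
        mul_one]
    rw [sign_eq, zsmul_eq_mul, nsmul_one]
    push_cast
    ring
  rw [sum_eq_fwdDiff, mul_assoc]
  congr 1
  obtain hlt | rfl := hP.lt_or_eq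
  · rw [fwdDiff_iter_eq_zero_of_degree_lt hlt, coeff_eq_zero_of_natDegree_lt hlt, mul_zero,
      Pi.zero_apply]
  · rw [fwdDiff_iter_degree_eq_factorial, leadingCoeff, Pi.smul_apply, Pi.natCast_apply,
      smul_eq_mul, mul_comm]

theorem integral_Ioi_rpow_smul_comp_mul_sq {E : Type*} [NormedAddCommGroup E] [NormedSpace ℝ E]
    {ξ : ℝ} (hξ : 0 < ξ) (ν : ℝ) (g : ℝ → E) :
    ∫ x in Ioi 0, x ^ (1 + 2 * ν) • g (ξ * x ^ 2)
      = (2 * ξ ^ (1 + ν))⁻¹ • ∫ y in Ioi 0, y ^ ν • g y := by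
  have integrand_eq {x : ℝ} (hx : 0 < x) : x ^ (1 + 2 * ν) • g (ξ * x ^ 2)
      = (2 * ξ ^ ν)⁻¹ •
        (2 * x ^ ((2 : ℝ) - 1)) • (ξ * x ^ (2 : ℝ)) ^ ν • g (ξ * x ^ (2 : ℝ)) := by
    rw [smul_smul, smul_smul, mul_rpow hξ.le (by positivity), ← rpow_mul hx.le, rpow_add hx,
      rpow_two, show (2 : ℝ) - 1 = 1 by norm_num]
    congr 1
    field_simp
  rw [setIntegral_congr_fun measurableSet_Ioi fun x hx ↦ integrand_eq hx, integral_smul,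
    integral_comp_rpow_Ioi_of_pos (g := fun y ↦ (ξ * y) ^ ν • g (ξ * y)) two_pos,
    integral_comp_mul_left_Ioi (fun y ↦ y ^ ν • g y) 0 hξ, mul_zero, smul_smul, ← mul_inv,
    rpow_add hξ, rpow_one, mul_assoc, mul_comm (ξ ^ ν)]

theorem poch_pos {b : ℝ} (hb : 0 < b) (n : ℕ) : 0 < poch b n :=
  ascPochhammer_pos n b hb

theorem poch_neg_natCast (k m : ℕ) :
    poch (-(k : ℝ)) m = (-1) ^ m * (k.choose m : ℝ) * m.factorial := by
  rw [poch, ascPochhammer_eval_neg_eq_descPochhammer, descPochhammer_eval_eq_descFactorial,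
    Nat.descFactorial_eq_factorial_mul_choose]
  push_cast
  ring

theorem Gamma_add_natCast {b : ℝ} (hb : 0 < b) (n : ℕ) : Gamma (b + n) = poch b n * Gamma b := by
  induction n with
  | zero => simp [poch]
  | succ n ih =>
    rw [Nat.cast_succ, ← add_assoc, Gamma_add_one (by positivity), ih, poch, poch,
      ascPochhammer_succ_eval]
    ring

theorem kummerM_neg_natCast (b z : ℝ) (k : ℕ) :
    kummerM (-(k : ℝ)) b z
      = ∑ m ∈ Finset.range (k + 1), (-1) ^ m * (k.choose m : ℝ) / poch b m * z ^ m := by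
  rw [kummerM, tsum_eq_sum (s := Finset.range (k + 1)) fun m hm ↦ ?_]
  · refine Finset.sum_congr rfl fun m _ ↦ ?_
    rw [poch_neg_natCast, mul_div_mul_right _ _ (by positivity)]
  · rw [poch_neg_natCast, Nat.choose_eq_zero_of_lt (by simpa using hm)]
    simp

section Laguerre

open Polynomial

/-- The function `laguerreL ν k` as an element of `ℝ[X]`, giving access to its degree and
coefficients. -/
noncomputable def laguerrePoly (ν : ℝ) (k : ℕ) : ℝ[X] :=
  ∑ m ∈ Finset.range (k + 1),
    monomial m (poch (1 + ν) k / k.factorial * ((-1) ^ m * k.choose m / poch (1 + ν) m))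

/-- The moment functional `p ↦ ∫₀^∞ e^{-y} y^ν p(y) dy` of the gamma weight for `-1 < ν`, encoded by
its moments `Γ(1 + ν + n)` so that linearity needs no integrability. -/
noncomputable def gammaMoment (ν : ℝ) : ℝ[X] →ₗ[ℝ] ℝ :=
  lsum fun n ↦ Gamma (1 + ν + n) • LinearMap.id

variable {ν : ℝ}

theorem eval_laguerrePoly (ν : ℝ) (k : ℕ) (x : ℝ) :
    (laguerrePoly ν k).eval x = laguerreL ν k x := by
  rw [laguerreL, kummerM_neg_natCast, laguerrePoly, eval_finsetSum, Finset.mul_sum]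
  exact Finset.sum_congr rfl fun m _ ↦ by rw [eval_monomial, mul_assoc]

theorem natDegree_laguerrePoly_le (ν : ℝ) (k : ℕ) : (laguerrePoly ν k).natDegree ≤ k :=
  natDegree_sum_le_of_forall_le _ _ fun _ hm ↦
    (natDegree_monomial_le _).trans (Finset.mem_range_succ_iff.mp hm)

theorem coeff_laguerrePoly_self (hν : -1 < ν) (k : ℕ) :
    (laguerrePoly ν k).coeff k = (-1) ^ k / k.factorial := by
  have poch_ne_zero : poch (1 + ν) k ≠ 0 := (poch_pos (by linarith) k).ne'
  simp only [laguerrePoly, finsetSum_coeff, coeff_monomial, Finset.sum_ite_eq',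
    Finset.self_mem_range_succ, if_true, Nat.choose_self, Nat.cast_one]
  field_simp

theorem gammaMoment_monomial (ν : ℝ) (n : ℕ) (a : ℝ) :
    gammaMoment ν (monomial n a) = Gamma (1 + ν + n) * a := by
  simp [gammaMoment]

theorem rpow_mul_exp_neg_mul_eval_monomial {y : ℝ} (hy : 0 < y) (ν : ℝ) (n : ℕ) (a : ℝ) :
    y ^ ν * (exp (-y) * (monomial n a).eval y) = exp (-y) * y ^ (1 + ν + n - 1) * a := by
  rw [eval_monomial, show 1 + ν + n - 1 = ν + n by ring, rpow_add_natCast hy.ne']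
  ring

theorem integrableOn_rpow_mul_exp_neg_mul_eval (hν : -1 < ν) (p : ℝ[X]) :
    IntegrableOn (fun y ↦ y ^ ν * (exp (-y) * p.eval y)) (Ioi 0) := by
  induction p using Polynomial.induction_on' with
  | add p q hp hq =>
    simp only [eval_add, mul_add]
    exact hp.add hq
  | monomial n a =>
    have moment_pos : 0 < 1 + ν + n := by linarith [n.cast_nonneg (α := ℝ)]
    exact IntegrableOn.congr_fun ((GammaIntegral_convergent moment_pos).mul_const a)
      (fun y hy ↦ (rpow_mul_exp_neg_mul_eval_monomial hy ν n a).symm) measurableSet_Ioi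

theorem integral_rpow_mul_exp_neg_mul_eval (hν : -1 < ν) (p : ℝ[X]) :
    ∫ y in Ioi 0, y ^ ν * (exp (-y) * p.eval y) = gammaMoment ν p := by
  induction p using Polynomial.induction_on' with
  | add p q hp hq =>
    simp only [eval_add, mul_add]
    rw [integral_add (integrableOn_rpow_mul_exp_neg_mul_eval hν p)
      (integrableOn_rpow_mul_exp_neg_mul_eval hν q), hp, hq, map_add]
  | monomial n a =>
    have moment_pos : 0 < 1 + ν + n := by linarith [n.cast_nonneg (α := ℝ)]
    rw [setIntegral_congr_fun measurableSet_Ioi fun y hy ↦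
      rpow_mul_exp_neg_mul_eval_monomial hy ν n a, integral_mul_const,
      ← Gamma_eq_integral moment_pos, gammaMoment_monomial]

theorem gammaMoment_monomial_mul_laguerrePoly (hν : -1 < ν) {n k : ℕ} (hn : n ≤ k) (a : ℝ) :
    gammaMoment ν (monomial n a * laguerrePoly ν k)
      = (-1) ^ k * Gamma (1 + ν + k) * (monomial n a).coeff k := by
  have hb : 0 < 1 + ν := by linarith
  have moment_eq (m : ℕ) : gammaMoment ν (monomial n a * monomial m
        (poch (1 + ν) k / k.factorial * ((-1) ^ m * k.choose m / poch (1 + ν) m)))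
      = a * Gamma (1 + ν + k) / k.factorial
        * ((-1) ^ m * k.choose m * (ascPochhammer ℝ n).eval (1 + ν + m)) := by
    have poch_ne_zero : poch (1 + ν) m ≠ 0 := (poch_pos hb m).ne'
    rw [monomial_mul_monomial, gammaMoment_monomial, Nat.cast_add, add_comm (n : ℝ), ← add_assoc,
      Gamma_add_natCast (by positivity) n, Gamma_add_natCast hb m, Gamma_add_natCast hb k, poch]
    field_simp
  have coeff_ascPochhammer : (ascPochhammer ℝ n).coeff k = if n = k then 1 else 0 := by
    split_ifs with hnk
    · simpa only [Monic, leadingCoeff, ascPochhammer_natDegree, hnk] using monic_ascPochhammer ℝ n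
    · exact coeff_eq_zero_of_natDegree_lt
        ((ascPochhammer_natDegree ℝ n).trans_lt (lt_of_le_of_ne hn hnk))
  rw [laguerrePoly, Finset.mul_sum, map_sum, Finset.sum_congr rfl fun m _ ↦ moment_eq m,
    ← Finset.mul_sum, sum_range_neg_one_pow_mul_choose_mul_eval_add
      ((ascPochhammer_natDegree ℝ n).trans_le hn), coeff_ascPochhammer, coeff_monomial]
  split_ifs
  · field_simp
  · simp only [mul_zero]

theorem gammaMoment_mul_laguerrePoly (hν : -1 < ν) {p : ℝ[X]} {k : ℕ} (hp : p.natDegree ≤ k) :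
    gammaMoment ν (p * laguerrePoly ν k) = (-1) ^ k * Gamma (1 + ν + k) * p.coeff k := by
  have p_eq := p.as_sum_range' (k + 1) (Nat.lt_succ_of_le hp)
  calc gammaMoment ν (p * laguerrePoly ν k)
    _ = ∑ n ∈ Finset.range (k + 1),
          gammaMoment ν (monomial n (p.coeff n) * laguerrePoly ν k) := by
      rw [← map_sum, ← Finset.sum_mul, ← p_eq]
    _ = ∑ n ∈ Finset.range (k + 1),
          (-1) ^ k * Gamma (1 + ν + k) * (monomial n (p.coeff n)).coeff k :=
      Finset.sum_congr rfl fun n hn ↦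
        gammaMoment_monomial_mul_laguerrePoly hν (Finset.mem_range_succ_iff.mp hn) _
    _ = (-1) ^ k * Gamma (1 + ν + k) * p.coeff k := by
      rw [← Finset.mul_sum, ← finsetSum_coeff, ← p_eq]

theorem gammaMoment_laguerrePoly_mul_laguerrePoly (hν : -1 < ν) (j k : ℕ) :
    gammaMoment ν (laguerrePoly ν j * laguerrePoly ν k)
      = if j = k then Gamma (1 + ν + k) / k.factorial else 0 := by
  wlog hjk : j ≤ k generalizing j k
  · rw [mul_comm, this k j (le_of_not_ge hjk)]
    grind
  rw [gammaMoment_mul_laguerrePoly hν ((natDegree_laguerrePoly_le ν j).trans hjk)]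
  split_ifs with h
  · rw [h, coeff_laguerrePoly_self hν, mul_right_comm, mul_div_assoc', ← mul_pow]
    ring
  · rw [coeff_eq_zero_of_natDegree_lt, mul_zero]
    exact (natDegree_laguerrePoly_le ν j).trans_lt (lt_of_le_of_ne hjk h)

end Laguerre

theorem PhiFun_mul_PhiFun {ν ξ x : ℝ} (hν : -1 < ν) (hξ : 0 < ξ) (hx : 0 < x) (j k : ℕ) :
    PhiFun ν ξ k x * PhiFun ν ξ j x
      = 2 * ξ ^ (1 + ν) / Gamma (1 + ν)
          * (√(k.factorial / poch (1 + ν) k) * √(j.factorial / poch (1 + ν) j))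
        * (x ^ (1 + 2 * ν)
          * (exp (-(ξ * x ^ 2)) * (laguerrePoly ν j * laguerrePoly ν k).eval (ξ * x ^ 2))) := by
  have norm_nonneg : 0 ≤ 2 * ξ ^ (1 + ν) / Gamma (1 + ν) :=
    div_nonneg (by positivity) (Gamma_nonneg_of_nonneg (by linarith))
  have sqrt_mul_sqrt : 2 * ξ ^ (1 + ν) / Gamma (1 + ν)
      = √(2 * ξ ^ (1 + ν) / Gamma (1 + ν)) * √(2 * ξ ^ (1 + ν) / Gamma (1 + ν)) :=
    (mul_self_sqrt norm_nonneg).symm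
  have exp_mul_exp : exp (-(ξ * x ^ 2)) = exp (-ξ * x ^ 2 / 2) * exp (-ξ * x ^ 2 / 2) := by
    rw [← exp_add]
    ring_nf
  have rpow_mul_rpow : x ^ (1 + 2 * ν) = x ^ ((1 : ℝ) / 2 + ν) * x ^ ((1 : ℝ) / 2 + ν) := by
    rw [← rpow_add hx]
    ring_nf
  rw [sqrt_mul_sqrt, exp_mul_exp, rpow_mul_rpow, Polynomial.eval_mul, eval_laguerrePoly,
    eval_laguerrePoly, PhiFun, PhiFun]
  ring

theorem integral_PhiFun_mul_PhiFun {ν ξ : ℝ} (hν : -1 < ν) (hξ : 0 < ξ) (j k : ℕ) :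
    ∫ x in Ioi 0, PhiFun ν ξ k x * PhiFun ν ξ j x
      = √(k.factorial / poch (1 + ν) k) * √(j.factorial / poch (1 + ν) j) / Gamma (1 + ν)
        * gammaMoment ν (laguerrePoly ν j * laguerrePoly ν k) := by
  have substitution := integral_Ioi_rpow_smul_comp_mul_sq hξ ν
    fun y ↦ exp (-y) * (laguerrePoly ν j * laguerrePoly ν k).eval y
  simp only [smul_eq_mul] at substitution
  rw [setIntegral_congr_fun measurableSet_Ioi fun x hx ↦ PhiFun_mul_PhiFun hν hξ hx j k,
    integral_const_mul, substitution, integral_rpow_mul_exp_neg_mul_eval hν]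
  field_simp

theorem phi_orthonormal_general {ν ξ : ℝ} (hν : -1 < ν) (hξ : 0 < ξ) (j k : ℕ) :
    ∫ x in Ioi (0 : ℝ), PhiFun ν ξ k x * PhiFun ν ξ j x = if j = k then 1 else 0 := by
  have hb : 0 < 1 + ν := by linarith
  rw [integral_PhiFun_mul_PhiFun hν hξ, gammaMoment_laguerrePoly_mul_laguerrePoly hν]
  split_ifs with hjk
  · have poch_pos_k : 0 < poch (1 + ν) k := poch_pos hb k
    have Gamma_ne_zero : Gamma (1 + ν) ≠ 0 := (Gamma_pos_of_pos hb).ne'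
    rw [hjk, mul_self_sqrt (by positivity), Gamma_add_natCast hb]
    field_simp [Gamma_ne_zero]
  · rw [mul_zero]

/-- For `ν > 0`, `ξ > 0` and `j, k ∈ ℕ`, `∫₀^∞ Φ_{ξ,k} Φ_{ξ,j} dx` equals `1` if `j = k`
and `0` otherwise: the family `(Φ_{ξ,k})_k` is orthonormal in `L²((0,∞))`. -/
theorem phi_orthonormal (ν ξ : ℝ) (hν : 0 < ν) (hξ : 0 < ξ) (j k : ℕ) :
    ∫ x in Set.Ioi (0 : ℝ), PhiFun ν ξ k x * PhiFun ν ξ j x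
      = if j = k then 1 else 0 :=
  phi_orthonormal_general (by linarith) hξ j k
end

section
/- Let ν > 0, L > 0, T > 0 and ξ > 0, and set θ(t) = ξ coth(2ξt) and c = ν² − 1/4. Let g : (0,T) × [0,L] → ℝ be smooth (infinitely differentiable) with g(t,0) = g(t,L) = 0 for every t ∈ (0,T). Define P₁g = −∂_x²g + (L²/2)θ'(t)g + (c/x²)g, P₂g = ∂_t g + 2θ(t) x ∂_x g + θ(t) g, and D(t) = ∫₀^L ( (∂_x g(t,x))² + (L²/2)θ'(t) g(t,x)² + (c/x²) g(t,x)² ) dx. Then D is differentiable on (0,T) and for every t ∈ (0,T): ∫₀^L P₁g(t,x) · P₂g(t,x) dx = (1/2) D'(t) + 2θ(t) D(t) − θ(t) · L · (∂_x g(t,L))². -/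
open MeasureTheory Real Set

/-- `θ(t) = ξ coth(2ξt)`. -/
noncomputable def theta (ξ : ℝ) : ℝ → ℝ :=
  fun t => ξ * (Real.cosh (2 * ξ * t) / Real.sinh (2 * ξ * t))

/-- `P₁g = −∂_x²g + (L²/2)θ'(t)g + (c/x²)g` with `c = ν² − 1/4`. -/
noncomputable def P1 (ν L ξ : ℝ) (g : ℝ → ℝ → ℝ) (t x : ℝ) : ℝ :=
  -(derivWithin (derivWithin (fun y => g t y) (Set.Icc 0 L)) (Set.Icc 0 L) x)
    + L ^ 2 / 2 * deriv (theta ξ) t * g t x + ((ν ^ 2 - 1 / 4) / x ^ 2) * g t x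

/-- `P₂g = ∂_t g + 2θ(t) x ∂_x g + θ(t) g`. -/
noncomputable def P2 (L ξ : ℝ) (g : ℝ → ℝ → ℝ) (t x : ℝ) : ℝ :=
  deriv (fun s => g s x) t + 2 * theta ξ t * x * derivWithin (fun y => g t y) (Set.Icc 0 L) x
    + theta ξ t * g t x

/-- `D(t) = ∫₀^L ((∂_x g)² + (L²/2)θ'(t) g² + (c/x²) g²) dx`. -/
noncomputable def Dfun (ν L ξ : ℝ) (g : ℝ → ℝ → ℝ) (t : ℝ) : ℝ :=
  ∫ x in (0 : ℝ)..L,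
    ((derivWithin (fun y => g t y) (Set.Icc 0 L) x) ^ 2
      + L ^ 2 / 2 * deriv (theta ξ) t * (g t x) ^ 2
      + ((ν ^ 2 - 1 / 4) / x ^ 2) * (g t x) ^ 2)

/-!
Put `u = g(t, ·)`, `w = ∂ₜg(t, ·)`, `k = (L²/2) θ'(t)`, `H = -∂ₓ² + c/x²` and `A = 2x ∂ₓ + 1`, so
that `P₁g = Hu + k u` and `P₂g = w + θ A u`. Let `B` be the bilinear form of `H`. Since `A` is
skew-adjoint and `[H, A] = 4H`, integration by parts gives

* `∫ Hu · w = B(u, w)`,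
* `∫ Hu · Au = 2 B(u, u) - L u'(L)²`,
* `∫ u · Au = 0`.

On the other hand `D = B(u, u) + k ∫ u²`, and `θ' = 2 (ξ² - θ²)` yields `k' = -4 θ k`, so the terms
in `∫ u²` of `D'/2` and `2 θ D` cancel. All singular integrals are controlled by writing
`u = x q` with `q` continuous, jointly in `(t, x)`.
-/

section PartialDerivatives

variable {E : Type*} [NormedAddCommGroup E] [NormedSpace ℝ E] {J K : Set ℝ} {g : ℝ → ℝ → E}
  {t x : ℝ}

lemma contDiffOn_slice {n : WithTop ℕ∞} (hg : ContDiffOn ℝ n (Function.uncurry g) (J ×ˢ K))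
    (ht : t ∈ J) : ContDiffOn ℝ n (g t) K :=
  hg.comp (contDiff_prodMk_right t).contDiffOn fun _ hx => ⟨ht, hx⟩

lemma hasDerivAt_time_of_differentiableOn (hJ : IsOpen J)
    (hg : DifferentiableOn ℝ (Function.uncurry g) (J ×ˢ K)) (ht : t ∈ J) (hx : x ∈ K) :
    HasDerivAt (fun s => g s x)
      (fderivWithin ℝ (Function.uncurry g) (J ×ˢ K) (t, x) (1, 0)) t := by
  have hline : HasDerivWithinAt (fun s : ℝ => (s, x)) (1, 0) J t :=
    (hasDerivWithinAt_id t J).prodMk (hasDerivWithinAt_const t J x)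
  exact (HasFDerivWithinAt.comp_hasDerivWithinAt (f := fun s : ℝ => (s, x)) t
    (hg (t, x) ⟨ht, hx⟩).hasFDerivWithinAt hline fun s hs => ⟨hs, hx⟩).hasDerivAt
    (hJ.mem_nhds ht)

lemma hasDerivWithinAt_space_of_differentiableOn
    (hg : DifferentiableOn ℝ (Function.uncurry g) (J ×ˢ K)) (ht : t ∈ J) (hx : x ∈ K) :
    HasDerivWithinAt (g t)
      (fderivWithin ℝ (Function.uncurry g) (J ×ˢ K) (t, x) (0, 1)) K x := by
  have hline : HasDerivWithinAt (fun y : ℝ => (t, y)) (0, 1) K x :=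
    (hasDerivWithinAt_const x K t).prodMk (hasDerivWithinAt_id x K)
  exact HasFDerivWithinAt.comp_hasDerivWithinAt (f := fun y : ℝ => (t, y)) x
    (hg (t, x) ⟨ht, hx⟩).hasFDerivWithinAt hline fun y hy => ⟨ht, hy⟩

lemma contDiffOn_deriv_time {m n : WithTop ℕ∞} (hJ : IsOpen J) (hK : UniqueDiffOn ℝ K)
    (hg : ContDiffOn ℝ n (Function.uncurry g) (J ×ˢ K)) (hmn : m + 1 ≤ n) :
    ContDiffOn ℝ m (Function.uncurry fun t x => deriv (fun s => g s x) t) (J ×ˢ K) := by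
  have hdiff := hg.differentiableOn (ne_bot_of_le_ne_bot (by simp) hmn)
  refine ((hg.fderivWithin (hJ.uniqueDiffOn.prod hK) hmn).clm_apply
    (contDiffOn_const (c := (1, 0)))).congr fun p hp => ?_
  exact (hasDerivAt_time_of_differentiableOn hJ hdiff hp.1 hp.2).deriv

lemma contDiffOn_derivWithin_space {m n : WithTop ℕ∞} (hJ : IsOpen J) (hK : UniqueDiffOn ℝ K)
    (hg : ContDiffOn ℝ n (Function.uncurry g) (J ×ˢ K)) (hmn : m + 1 ≤ n) :
    ContDiffOn ℝ m (Function.uncurry fun t => derivWithin (g t) K) (J ×ˢ K) := by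
  have hdiff := hg.differentiableOn (ne_bot_of_le_ne_bot (by simp) hmn)
  refine ((hg.fderivWithin (hJ.uniqueDiffOn.prod hK) hmn).clm_apply
    (contDiffOn_const (c := (0, 1)))).congr fun p hp => ?_
  exact (hasDerivWithinAt_space_of_differentiableOn hdiff hp.1 hp.2).derivWithin (hK p.2 hp.2)

lemma hasDerivAt_derivWithin_space (hJ : IsOpen J) (hK : UniqueDiffOn ℝ K)
    (hg : ContDiffOn ℝ 2 (Function.uncurry g) (J ×ˢ K)) (ht : t ∈ J) (hx : x ∈ K)
    (hxK : x ∈ closure (interior K)) :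
    HasDerivAt (fun s => derivWithin (g s) K x)
      (derivWithin (fun y => deriv (fun s => g s y) t) K x) t := by
  set S := J ×ˢ K
  have hS : UniqueDiffOn ℝ S := hJ.uniqueDiffOn.prod hK
  have hp : (t, x) ∈ S := ⟨ht, hx⟩
  have hpS : (t, x) ∈ closure (interior S) := by
    rw [interior_prod_eq, hJ.interior_eq, closure_prod_eq]
    exact ⟨subset_closure ht, hxK⟩
  have hsymm := (hg (t, x) hp).isSymmSndFDerivWithinAt (by simp) hS hpS hp
  have hdiff := hg.differentiableOn two_ne_zero
  have hfderiv : DifferentiableOn ℝ (fderivWithin ℝ (Function.uncurry g) S) S :=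
    (hg.fderivWithin hS (m := 1) (by norm_num)).differentiableOn one_ne_zero
  have hspace : HasDerivAt (fun s => derivWithin (g s) K x)
      (fderivWithin ℝ (fderivWithin ℝ (Function.uncurry g) S) S (t, x) (1, 0) (0, 1)) t := by
    refine ((hasDerivAt_time_of_differentiableOn (g := fun s y =>
      fderivWithin ℝ (Function.uncurry g) S (s, y)) hJ hfderiv ht hx).clm_apply
      (hasDerivAt_const t ((0, 1) : ℝ × ℝ))).congr_of_eventuallyEq ?_ |>.congr_deriv (by simp; rfl)
    filter_upwards [hJ.mem_nhds ht] with s hs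
    exact (hasDerivWithinAt_space_of_differentiableOn hdiff hs hx).derivWithin (hK x hx)
  have htime : HasDerivWithinAt (fun y => deriv (fun s => g s y) t)
      (fderivWithin ℝ (fderivWithin ℝ (Function.uncurry g) S) S (t, x) (0, 1) (1, 0)) K x := by
    refine ((hasDerivWithinAt_space_of_differentiableOn (g := fun s y =>
      fderivWithin ℝ (Function.uncurry g) S (s, y)) hfderiv ht hx).clm_apply
      (hasDerivWithinAt_const x K ((1, 0) : ℝ × ℝ))).congr_of_mem (fun y hy => ?_) hx
      |>.congr_deriv (by simp; rfl)
    exact (hasDerivAt_time_of_differentiableOn hJ hdiff ht hy).deriv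
  rwa [htime.derivWithin (hK x hx), ← hsymm.eq]

end PartialDerivatives

open scoped Interval in
lemma hasDerivAt_intervalIntegral_of_continuousOn {E : Type*} [NormedAddCommGroup E]
    [NormedSpace ℝ E] {J : Set ℝ} (hJ : IsOpen J) {a b t : ℝ} {f f' : ℝ → ℝ → E}
    (hf : ∀ s ∈ J, ContinuousOn (f s) [[a, b]])
    (hf' : ContinuousOn (Function.uncurry f') (J ×ˢ [[a, b]]))
    (hderiv : ∀ s ∈ J, ∀ x ∈ Ι a b, HasDerivAt (fun r => f r x) (f' s x) s) (ht : t ∈ J) :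
    HasDerivAt (fun s => ∫ x in a..b, f s x) (∫ x in a..b, f' t x) t := by
  obtain ⟨ε, hε, hball⟩ := Metric.nhds_basis_closedBall.mem_iff.1 (hJ.mem_nhds ht)
  obtain ⟨C, hC⟩ := ((isCompact_closedBall t ε).prod isCompact_uIcc).exists_bound_of_continuousOn
    (hf'.mono (prod_mono_left hball))
  have hslice : ContinuousOn (f' t) [[a, b]] :=
    hf'.comp (f := fun x => (t, x)) (by fun_prop) fun x hx => ⟨ht, hx⟩
  have hmeas {φ : ℝ → E} (hφ : ContinuousOn φ [[a, b]]) :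
      AEStronglyMeasurable φ (volume.restrict (Ι a b)) :=
    (hφ.mono uIoc_subset_uIcc).aestronglyMeasurable measurableSet_uIoc
  refine (intervalIntegral.hasDerivAt_integral_of_dominated_loc_of_deriv_le
    (bound := fun _ => C) (Metric.closedBall_mem_nhds t hε) ?_ (hf t ht).intervalIntegrable
    (hmeas hslice) ?_ (by simp) ?_).2
  · filter_upwards [hJ.mem_nhds ht] with s hs using hmeas (hf s hs)
  · exact .of_forall fun x hx s hs => hC (s, x) ⟨hs, uIoc_subset_uIcc hx⟩
  · exact .of_forall fun x hx s hs => hderiv s (hball hs) x hx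

section HadamardQuotient

/-- The continuous extension to `[0, L]` of the quotient `u x / x` of a function `u` vanishing at
`0`, in the integral form `∫₀¹ u' (s x) ds` of Hadamard's lemma. -/
noncomputable def hadamardQuotient (L : ℝ) (u : ℝ → ℝ) (x : ℝ) : ℝ :=
  ∫ s in (0 : ℝ)..1, derivWithin u (Icc 0 L) (s * x)

variable {L : ℝ}

lemma mul_hadamardQuotient {u : ℝ → ℝ} (hu : ContDiffOn ℝ 1 u (Icc 0 L)) (hu0 : u 0 = 0) {x : ℝ}
    (hx : x ∈ Icc 0 L) : x * hadamardQuotient L u x = u x := by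
  have hsub : Icc 0 x ⊆ Icc 0 L := Icc_subset_Icc_right hx.2
  rcases hx.1.eq_or_lt with rfl | hx0
  · simp [hu0]
  have hcont : ContinuousOn (derivWithin u (Icc 0 L)) (Icc 0 x) :=
    (hu.continuousOn_derivWithin (uniqueDiffOn_Icc (hx0.trans_le hx.2)) le_rfl).mono hsub
  have hderiv : ∀ y ∈ Ioo 0 x, HasDerivAt u (derivWithin u (Icc 0 L) y) y := fun y hy =>
    (hu.differentiableOn one_ne_zero y (hsub (Ioo_subset_Icc_self hy))).hasDerivWithinAt.hasDerivAt
      (Icc_mem_nhds hy.1 (hy.2.trans_le hx.2))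
  rw [hadamardQuotient, intervalIntegral.mul_integral_comp_mul_right, zero_mul, one_mul,
    intervalIntegral.integral_eq_sub_of_hasDerivAt_of_le hx.1 (hu.continuousOn.mono hsub) hderiv
      (hcont.intervalIntegrable_of_Icc hx.1), hu0, sub_zero]

lemma hadamardQuotient_eq_div {u : ℝ → ℝ} (hu : ContDiffOn ℝ 1 u (Icc 0 L)) (hu0 : u 0 = 0) {x : ℝ}
    (hx : x ∈ Ioc 0 L) : hadamardQuotient L u x = u x / x :=
  eq_div_of_mul_eq hx.1.ne' (by rw [mul_comm, mul_hadamardQuotient hu hu0 (Ioc_subset_Icc_self hx)])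

lemma continuousOn_uncurry_hadamardQuotient {J : Set ℝ} (hJ : IsOpen J) {g : ℝ → ℝ → ℝ}
    (hg : ContinuousOn (Function.uncurry fun t => derivWithin (g t) (Icc 0 L)) (J ×ˢ Icc 0 L)) :
    ContinuousOn (Function.uncurry fun t => hadamardQuotient L (g t)) (J ×ˢ Icc 0 L) := by
  have : LocallyCompactSpace ↑(J ×ˢ Icc 0 L) :=
    ((hJ.isLocallyClosed.preimage continuous_fst).inter
      (isClosed_Icc.isLocallyClosed.preimage continuous_snd)).locallyCompactSpace
  -- Projecting `s` to `[0, 1]` makes the integrand continuous in `s` on the whole line.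
  let f (p : ↑(J ×ˢ Icc 0 L)) (s : ℝ) : ℝ :=
    derivWithin (g p.1.1) (Icc 0 L) (projIcc 0 1 zero_le_one s * p.1.2)
  have hmem (p : ↑(J ×ˢ Icc 0 L)) (s : Icc (0 : ℝ) 1) : (s : ℝ) * p.1.2 ∈ Icc 0 L :=
    ⟨mul_nonneg s.2.1 p.2.2.1, (mul_le_of_le_one_left p.2.2.1 s.2.2).trans p.2.2.2⟩
  have hf : Continuous (Function.uncurry f) :=
    hg.comp_continuous (f := fun q : ↑(J ×ˢ Icc 0 L) × ℝ =>
      (q.1.1.1, (projIcc 0 1 zero_le_one q.2 : ℝ) * q.1.1.2)) (by fun_prop)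
      fun q => ⟨q.1.2.1, hmem q.1 _⟩
  rw [continuousOn_iff_continuous_domRestrict]
  refine (intervalIntegral.continuous_parametric_intervalIntegral_of_continuous' hf 0 1).congr
    fun p => intervalIntegral.integral_congr fun s hs => ?_
  rw [uIcc_of_le zero_le_one] at hs
  simp only [f, projIcc_of_mem zero_le_one hs]

lemma continuousOn_hadamardQuotient {u : ℝ → ℝ}
    (hu : ContinuousOn (derivWithin u (Icc 0 L)) (Icc 0 L)) :
    ContinuousOn (hadamardQuotient L u) (Icc 0 L) :=
  (continuousOn_uncurry_hadamardQuotient (g := fun _ => u) isOpen_univ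
    (hu.comp continuousOn_snd fun _ hp => hp.2)).comp (f := fun x => ((0 : ℝ), x))
    (by fun_prop) fun _ hx => ⟨mem_univ _, hx⟩

end HadamardQuotient

section HardyOperator

/-- The operator `-∂ₓ² + c/x²` on `[0, L]`. -/
noncomputable def hardyOperator (c L : ℝ) (u : ℝ → ℝ) (x : ℝ) : ℝ :=
  -(derivWithin (derivWithin u (Icc 0 L)) (Icc 0 L) x) + c / x ^ 2 * u x

/-- The bilinear form of `hardyOperator c L`. -/
noncomputable def hardyForm (c L : ℝ) (u w : ℝ → ℝ) : ℝ :=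
  ∫ x in (0 : ℝ)..L,
    (derivWithin u (Icc 0 L) x * derivWithin w (Icc 0 L) x + c / x ^ 2 * (u x * w x))

/-- The quadratic form of `hardyOperator c L + k`, so that `Dfun` at time `t` is the energy
of `g t` for `k = (L²/2) θ'(t)`. -/
noncomputable def hardyEnergy (c L k : ℝ) (u : ℝ → ℝ) : ℝ :=
  ∫ x in (0 : ℝ)..L, (derivWithin u (Icc 0 L) x ^ 2 + k * u x ^ 2 + c / x ^ 2 * u x ^ 2)

/-- The operator `2x ∂ₓ + 1` on `[0, L]`: twice the skew-adjoint generator `x ∂ₓ + 1/2` of the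
unitary dilations of `L²(0, ∞)`. -/
noncomputable def dilationGenerator (L : ℝ) (u : ℝ → ℝ) (x : ℝ) : ℝ :=
  2 * x * derivWithin u (Icc 0 L) x + u x

variable {L : ℝ} {u w : ℝ → ℝ}

lemma div_sq_mul_eq_hadamardQuotient (c : ℝ) (hu : ContDiffOn ℝ 1 u (Icc 0 L))
    (hw : ContDiffOn ℝ 1 w (Icc 0 L)) (hu0 : u 0 = 0) (hw0 : w 0 = 0) {x : ℝ}
    (hx : x ∈ Ioc 0 L) :
    c / x ^ 2 * (u x * w x) = c * (hadamardQuotient L u x * hadamardQuotient L w x) := by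
  rw [hadamardQuotient_eq_div hu hu0 hx, hadamardQuotient_eq_div hw hw0 hx]
  ring

lemma intervalIntegrable_div_sq_mul (c : ℝ) (hL : 0 < L) (hu : ContDiffOn ℝ 1 u (Icc 0 L))
    (hw : ContDiffOn ℝ 1 w (Icc 0 L)) (hu0 : u 0 = 0) (hw0 : w 0 = 0) :
    IntervalIntegrable (fun x => c / x ^ 2 * (u x * w x)) volume 0 L := by
  have hK := uniqueDiffOn_Icc hL
  have hcont : ContinuousOn (fun x => c * (hadamardQuotient L u x * hadamardQuotient L w x))
      (Icc 0 L) :=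
    continuousOn_const.mul
      ((continuousOn_hadamardQuotient (hu.continuousOn_derivWithin hK le_rfl)).mul
        (continuousOn_hadamardQuotient (hw.continuousOn_derivWithin hK le_rfl)))
  refine (hcont.intervalIntegrable_of_Icc hL.le).congr fun x hx => ?_
  rw [uIoc_of_le hL.le] at hx
  exact (div_sq_mul_eq_hadamardQuotient c hu hw hu0 hw0 hx).symm

lemma intervalIntegrable_hardyForm (c : ℝ) (hL : 0 < L) (hu : ContDiffOn ℝ 1 u (Icc 0 L))
    (hw : ContDiffOn ℝ 1 w (Icc 0 L)) (hu0 : u 0 = 0) (hw0 : w 0 = 0) :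
    IntervalIntegrable (fun x => derivWithin u (Icc 0 L) x * derivWithin w (Icc 0 L) x +
      c / x ^ 2 * (u x * w x)) volume 0 L :=
  have hK := uniqueDiffOn_Icc hL
  ContinuousOn.intervalIntegrable_of_Icc hL.le
    ((hu.continuousOn_derivWithin hK le_rfl).mul (hw.continuousOn_derivWithin hK le_rfl)) |>.add
    (intervalIntegrable_div_sq_mul c hL hu hw hu0 hw0)

lemma hardyForm_eq_integral_hadamardQuotient (c : ℝ) (hL : 0 ≤ L)
    (hu : ContDiffOn ℝ 1 u (Icc 0 L)) (hw : ContDiffOn ℝ 1 w (Icc 0 L)) (hu0 : u 0 = 0)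
    (hw0 : w 0 = 0) :
    hardyForm c L u w = ∫ x in (0 : ℝ)..L,
      (derivWithin u (Icc 0 L) x * derivWithin w (Icc 0 L) x +
        c * (hadamardQuotient L u x * hadamardQuotient L w x)) := by
  refine intervalIntegral.integral_congr_Ioo_of_le hL fun x hx => ?_
  simp only [div_sq_mul_eq_hadamardQuotient c hu hw hu0 hw0 (Ioo_subset_Ioc_self hx)]

lemma hardyEnergy_eq_hardyForm_add (c k : ℝ) (hL : 0 < L) (hu : ContDiffOn ℝ 1 u (Icc 0 L))
    (hu0 : u 0 = 0) :
    hardyEnergy c L k u = hardyForm c L u u + k * ∫ x in (0 : ℝ)..L, u x ^ 2 := by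
  have hsq : IntervalIntegrable (fun x => u x ^ 2) volume 0 L :=
    (hu.continuousOn.pow 2).intervalIntegrable_of_Icc hL.le
  rw [hardyForm, ← intervalIntegral.integral_const_mul, ← intervalIntegral.integral_add
    (intervalIntegrable_hardyForm c hL hu hu hu0 hu0) (hsq.const_mul k)]
  exact intervalIntegral.integral_congr fun x _ => by ring

lemma contDiffOn_dilationGenerator (hL : 0 < L) (hu : ContDiffOn ℝ 2 u (Icc 0 L)) :
    ContDiffOn ℝ 1 (dilationGenerator L u) (Icc 0 L) :=
  ((contDiffOn_const.mul contDiffOn_id).mul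
    (hu.derivWithin (uniqueDiffOn_Icc hL) (by norm_num))).add (hu.of_le one_le_two)

lemma dilationGenerator_zero (hu0 : u 0 = 0) : dilationGenerator L u 0 = 0 := by
  simp [dilationGenerator, hu0]

lemma integral_mul_dilationGenerator (hL : 0 < L) (hu : ContDiffOn ℝ 1 u (Icc 0 L)) :
    ∫ x in (0 : ℝ)..L, u x * dilationGenerator L u x = L * u L ^ 2 := by
  have hu' := hu.continuousOn_derivWithin (uniqueDiffOn_Icc hL) le_rfl
  have hderiv : ∀ x ∈ Ioo 0 L,
      HasDerivAt (fun y => y * u y ^ 2) (u x * dilationGenerator L u x) x := fun x hx => by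
    have hux := (hu.differentiableOn one_ne_zero x (Ioo_subset_Icc_self hx)).hasDerivWithinAt
      |>.hasDerivAt (Icc_mem_nhds hx.1 hx.2)
    refine ((hasDerivAt_id' x).mul (hux.pow 2)).congr_deriv ?_
    simp only [dilationGenerator, Pi.pow_apply]
    ring
  have hcont : ContinuousOn (fun x => u x * dilationGenerator L u x) (Icc 0 L) :=
    hu.continuousOn.mul (((continuousOn_const.mul continuousOn_id).mul hu').add hu.continuousOn)
  simpa using intervalIntegral.integral_eq_sub_of_hasDerivAt_of_le hL.le
    (continuousOn_id.mul (hu.continuousOn.pow 2)) hderiv (hcont.intervalIntegrable_of_Icc hL.le)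

lemma intervalIntegrable_hardyOperator_mul (c : ℝ) (hL : 0 < L) (hu : ContDiffOn ℝ 2 u (Icc 0 L))
    (hw : ContDiffOn ℝ 1 w (Icc 0 L)) (hu0 : u 0 = 0) (hw0 : w 0 = 0) :
    IntervalIntegrable (fun x => hardyOperator c L u x * w x) volume 0 L := by
  have hK := uniqueDiffOn_Icc hL
  have hu'' := (hu.derivWithin hK (m := 1) (by norm_num)).continuousOn_derivWithin hK le_rfl
  have hregular := (hu''.neg.mul hw.continuousOn).intervalIntegrable_of_Icc (μ := volume) hL.le
  refine (hregular.add
    (intervalIntegrable_div_sq_mul c hL (hu.of_le one_le_two) hw hu0 hw0)).congr fun x _ => ?_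
  simp only [hardyOperator, Pi.mul_apply, Pi.neg_apply]
  ring

lemma integral_hardyOperator_mul (c : ℝ) (hL : 0 < L) (hu : ContDiffOn ℝ 2 u (Icc 0 L))
    (hw : ContDiffOn ℝ 1 w (Icc 0 L)) (hu0 : u 0 = 0) (hw0 : w 0 = 0) (hwL : w L = 0) :
    ∫ x in (0 : ℝ)..L, hardyOperator c L u x * w x = hardyForm c L u w := by
  have hK := uniqueDiffOn_Icc hL
  have hu' : ContDiffOn ℝ 1 (derivWithin u (Icc 0 L)) (Icc 0 L) := hu.derivWithin hK (by norm_num)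
  have hprod : ContDiffOn ℝ 1 (derivWithin u (Icc 0 L) * w) (Icc 0 L) := hu'.mul hw
  have hboundary :
      ∫ x in (0 : ℝ)..L, derivWithin (derivWithin u (Icc 0 L) * w) (Icc 0 L) x = 0 := by
    simp [intervalIntegral.integral_derivWithin_Icc_of_contDiffOn_Icc hprod hL.le, hw0, hwL]
  have hparts := hprod.continuousOn_derivWithin hK le_rfl
    |>.intervalIntegrable_of_Icc (μ := volume) hL.le
  calc ∫ x in (0 : ℝ)..L, hardyOperator c L u x * w x
      = ∫ x in (0 : ℝ)..L, (derivWithin u (Icc 0 L) x * derivWithin w (Icc 0 L) x +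
          c / x ^ 2 * (u x * w x) - derivWithin (derivWithin u (Icc 0 L) * w) (Icc 0 L) x) := by
        refine intervalIntegral.integral_congr fun x hx => ?_
        rw [uIcc_of_le hL.le] at hx
        simp only [hardyOperator, derivWithin_mul (hu'.differentiableOn one_ne_zero x hx)
          (hw.differentiableOn one_ne_zero x hx)]
        ring
    _ = hardyForm c L u w := by
        rw [intervalIntegral.integral_sub
          (intervalIntegrable_hardyForm c hL (hu.of_le one_le_two) hw hu0 hw0) hparts, hboundary,
          sub_zero, hardyForm]

lemma continuousOn_sq_div (hL : 0 < L) (hu : ContDiffOn ℝ 1 u (Icc 0 L)) (hu0 : u 0 = 0) :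
    ContinuousOn (fun x => u x ^ 2 / x) (Icc 0 L) := by
  refine (hu.continuousOn.mul (continuousOn_hadamardQuotient
    (hu.continuousOn_derivWithin (uniqueDiffOn_Icc hL) le_rfl))).congr fun x hx => ?_
  rcases eq_or_ne x 0 with rfl | hx0
  · simp [hu0]
  · simp only [← mul_hadamardQuotient hu hu0 hx, Pi.mul_apply]
    field_simp

lemma hasDerivAt_hardyOperator_mul_dilationGenerator (c : ℝ) (hu : ContDiffOn ℝ 2 u (Icc 0 L))
    {x : ℝ} (hx : x ∈ Ioo 0 L) :
    HasDerivAt (fun y => -(y * derivWithin u (Icc 0 L) y ^ 2) - u y * derivWithin u (Icc 0 L) y +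
        c * (u y ^ 2 / y))
      (hardyOperator c L u x * dilationGenerator L u x -
        2 * (derivWithin u (Icc 0 L) x * derivWithin u (Icc 0 L) x + c / x ^ 2 * (u x * u x)))
      x := by
  have hK : UniqueDiffOn ℝ (Icc 0 L) := uniqueDiffOn_Icc (hx.1.trans hx.2)
  have hxK : Icc 0 L ∈ nhds x := Icc_mem_nhds hx.1 hx.2
  have hx0 : x ≠ 0 := hx.1.ne'
  have hux := (hu.differentiableOn two_ne_zero x (mem_of_mem_nhds hxK)).hasDerivWithinAt.hasDerivAt
    hxK
  have hux' := ((hu.derivWithin hK (m := 1) (by norm_num)).differentiableOn one_ne_zero x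
    (mem_of_mem_nhds hxK)).hasDerivWithinAt.hasDerivAt hxK
  refine ((((hasDerivAt_id' x).mul (hux'.pow 2)).neg.sub (hux.mul hux')).add
    (((hux.pow 2).div (hasDerivAt_id' x) hx0).const_mul c)).congr_deriv ?_
  simp only [hardyOperator, dilationGenerator, Pi.pow_apply]
  field_simp
  ring

lemma integral_hardyOperator_mul_dilationGenerator (c : ℝ) (hL : 0 < L)
    (hu : ContDiffOn ℝ 2 u (Icc 0 L)) (hu0 : u 0 = 0) (huL : u L = 0) :
    ∫ x in (0 : ℝ)..L, hardyOperator c L u x * dilationGenerator L u x =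
      2 * hardyForm c L u u - L * derivWithin u (Icc 0 L) L ^ 2 := by
  have hu1 : ContDiffOn ℝ 1 u (Icc 0 L) := hu.of_le one_le_two
  have hu' := hu1.continuousOn_derivWithin (uniqueDiffOn_Icc hL) le_rfl
  have hcont : ContinuousOn (fun y => -(y * derivWithin u (Icc 0 L) y ^ 2) -
      u y * derivWithin u (Icc 0 L) y + c * (u y ^ 2 / y)) (Icc 0 L) :=
    ((continuousOn_id.mul (hu'.pow 2)).neg.sub (hu.continuousOn.mul hu')).add
      (continuousOn_const.mul (continuousOn_sq_div hL hu1 hu0))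
  have hform := (intervalIntegrable_hardyForm c hL hu1 hu1 hu0 hu0).const_mul 2
  have hmul := intervalIntegrable_hardyOperator_mul c hL hu (contDiffOn_dilationGenerator hL hu)
    hu0 (dilationGenerator_zero hu0)
  have hFTC := intervalIntegral.integral_eq_sub_of_hasDerivAt_of_le hL.le hcont
    (fun _ => hasDerivAt_hardyOperator_mul_dilationGenerator c hu) (hmul.sub hform)
  rw [intervalIntegral.integral_sub hmul hform, intervalIntegral.integral_const_mul,
    ← hardyForm] at hFTC
  simp only [hu0, huL] at hFTC
  linear_combination hFTC

lemma integral_hardyOperator_add_mul_add_dilationGenerator (c k θ : ℝ) (hL : 0 < L)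
    (hu : ContDiffOn ℝ 2 u (Icc 0 L)) (hw : ContDiffOn ℝ 1 w (Icc 0 L)) (hu0 : u 0 = 0)
    (huL : u L = 0) (hw0 : w 0 = 0) (hwL : w L = 0) :
    ∫ x in (0 : ℝ)..L,
        (hardyOperator c L u x + k * u x) * (w x + θ * dilationGenerator L u x) =
      hardyForm c L u w + k * (∫ x in (0 : ℝ)..L, u x * w x) +
        θ * (2 * hardyForm c L u u - L * derivWithin u (Icc 0 L) L ^ 2) := by
  have hdil := contDiffOn_dilationGenerator hL hu
  have hdil0 : dilationGenerator L u 0 = 0 := dilationGenerator_zero hu0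
  have hint_mul {v : ℝ → ℝ} (hv : ContDiffOn ℝ 1 v (Icc 0 L)) :
      IntervalIntegrable (fun x => k * (u x * v x)) volume 0 L :=
    (continuousOn_const.mul (hu.continuousOn.mul hv.continuousOn)).intervalIntegrable_of_Icc hL.le
  have hint (v : ℝ → ℝ) (hv : ContDiffOn ℝ 1 v (Icc 0 L)) (hv0 : v 0 = 0) :
      IntervalIntegrable (fun x => hardyOperator c L u x * v x + k * (u x * v x)) volume 0 L :=
    (intervalIntegrable_hardyOperator_mul c hL hu hv hu0 hv0).add (hint_mul hv)
  have hsplit (v : ℝ → ℝ) (hv : ContDiffOn ℝ 1 v (Icc 0 L)) (hv0 : v 0 = 0) :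
      ∫ x in (0 : ℝ)..L, (hardyOperator c L u x * v x + k * (u x * v x)) =
        (∫ x in (0 : ℝ)..L, hardyOperator c L u x * v x) +
          k * ∫ x in (0 : ℝ)..L, u x * v x := by
    rw [intervalIntegral.integral_add (intervalIntegrable_hardyOperator_mul c hL hu hv hu0 hv0)
      (hint_mul hv), intervalIntegral.integral_const_mul]
  calc ∫ x in (0 : ℝ)..L,
        (hardyOperator c L u x + k * u x) * (w x + θ * dilationGenerator L u x)
      = ∫ x in (0 : ℝ)..L, ((hardyOperator c L u x * w x + k * (u x * w x)) +
          θ * (hardyOperator c L u x * dilationGenerator L u x +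
            k * (u x * dilationGenerator L u x))) :=
        intervalIntegral.integral_congr fun x _ => by ring
    _ = (∫ x in (0 : ℝ)..L, hardyOperator c L u x * w x) + k * (∫ x in (0 : ℝ)..L, u x * w x) +
          θ * ((∫ x in (0 : ℝ)..L, hardyOperator c L u x * dilationGenerator L u x) +
            k * ∫ x in (0 : ℝ)..L, u x * dilationGenerator L u x) := by
        rw [intervalIntegral.integral_add (hint w hw hw0) ((hint _ hdil hdil0).const_mul θ),
          intervalIntegral.integral_const_mul, hsplit w hw hw0, hsplit _ hdil hdil0]
    _ = _ := by
        rw [integral_hardyOperator_mul c hL hu hw hu0 hw0 hwL,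
          integral_hardyOperator_mul_dilationGenerator c hL hu hu0 huL,
          integral_mul_dilationGenerator hL (hu.of_le one_le_two), huL]
        ring

end HardyOperator

section TimeDerivative

variable {L t : ℝ} {J : Set ℝ} {g : ℝ → ℝ → ℝ}

lemma deriv_time_eq_zero {x : ℝ} (hJ : IsOpen J) (hg : ∀ s ∈ J, g s x = 0) (ht : t ∈ J) :
    deriv (fun s => g s x) t = 0 := by
  have hzero : (fun s => g s x) =ᶠ[nhds t] fun _ => 0 := by
    filter_upwards [hJ.mem_nhds ht] with s hs using hg s hs
  rw [hzero.deriv_eq, deriv_const]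

lemma hasDerivAt_integral_sq (hL : 0 < L) (hJ : IsOpen J)
    (hg : ContDiffOn ℝ 1 (Function.uncurry g) (J ×ˢ Icc 0 L)) (ht : t ∈ J) :
    HasDerivAt (fun s => ∫ x in (0 : ℝ)..L, g s x ^ 2)
      (2 * ∫ x in (0 : ℝ)..L, g t x * deriv (fun s => g s x) t) t := by
  rw [← intervalIntegral.integral_const_mul]
  have hgt := (contDiffOn_deriv_time (m := 0) hJ (uniqueDiffOn_Icc hL) hg le_rfl).continuousOn
  refine hasDerivAt_intervalIntegral_of_continuousOn hJ (f := fun s x => g s x ^ 2)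
    (f' := fun s x => 2 * (g s x * deriv (fun r => g r x) s)) (fun s hs => ?_) ?_ ?_ ht
  · exact uIcc_of_le hL.le ▸ (contDiffOn_slice hg hs).continuousOn.pow 2
  · exact uIcc_of_le hL.le ▸ continuousOn_const.mul (hg.continuousOn.mul hgt)
  · intro s hs x hx
    have hxK : x ∈ Icc 0 L := uIcc_of_le hL.le ▸ uIoc_subset_uIcc hx
    have hgs := hasDerivAt_time_of_differentiableOn hJ (hg.differentiableOn one_ne_zero) hs hxK
    exact (hgs.differentiableAt.hasDerivAt.pow 2).congr_deriv (by ring)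

lemma hasDerivAt_hadamardQuotient (hJ : IsOpen J)
    (hg : ContDiffOn ℝ 2 (Function.uncurry g) (J ×ˢ Icc 0 L)) (hg0 : ∀ s ∈ J, g s 0 = 0)
    (ht : t ∈ J) {x : ℝ} (hx : x ∈ Ioc 0 L) :
    HasDerivAt (fun s => hadamardQuotient L (g s) x)
      (hadamardQuotient L (fun y => deriv (fun s => g s y) t) x) t := by
  have hK := uniqueDiffOn_Icc (hx.1.trans_le hx.2)
  have hgt := contDiffOn_deriv_time (m := 1) hJ hK hg (by norm_num)
  rw [hadamardQuotient_eq_div (contDiffOn_slice hgt ht) (deriv_time_eq_zero hJ hg0 ht) hx]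
  refine ((hasDerivAt_time_of_differentiableOn hJ (hg.differentiableOn two_ne_zero) ht
    (Ioc_subset_Icc_self hx)).differentiableAt.hasDerivAt.div_const x).congr_of_eventuallyEq ?_
  filter_upwards [hJ.mem_nhds ht] with s hs
  exact hadamardQuotient_eq_div (contDiffOn_slice (hg.of_le one_le_two) hs) (hg0 s hs) hx

lemma hasDerivAt_hardyForm_self (c : ℝ) (hL : 0 < L) (hJ : IsOpen J)
    (hg : ContDiffOn ℝ 2 (Function.uncurry g) (J ×ˢ Icc 0 L)) (hg0 : ∀ s ∈ J, g s 0 = 0)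
    (ht : t ∈ J) :
    HasDerivAt (fun s => hardyForm c L (g s) (g s))
      (2 * hardyForm c L (g t) fun x => deriv (fun s => g s x) t) t := by
  have hK := uniqueDiffOn_Icc hL
  let w (s x : ℝ) : ℝ := deriv (fun r => g r x) s
  have hg1 : ContDiffOn ℝ 1 (Function.uncurry g) (J ×ˢ Icc 0 L) := hg.of_le one_le_two
  have hw : ContDiffOn ℝ 1 (Function.uncurry w) (J ×ˢ Icc 0 L) :=
    contDiffOn_deriv_time hJ hK hg (by norm_num)
  have hw0 : ∀ s ∈ J, w s 0 = 0 := fun s => deriv_time_eq_zero hJ hg0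
  have hgx := (contDiffOn_derivWithin_space (m := 0) hJ hK hg1 (by norm_num)).continuousOn
  have hwx := (contDiffOn_derivWithin_space (m := 0) hJ hK hw (by norm_num)).continuousOn
  have hgq := continuousOn_uncurry_hadamardQuotient hJ hgx
  have hwq := continuousOn_uncurry_hadamardQuotient hJ hwx
  rw [hardyForm_eq_integral_hadamardQuotient c hL.le (contDiffOn_slice hg1 ht)
    (contDiffOn_slice hw ht) (hg0 t ht) (hw0 t ht), ← intervalIntegral.integral_const_mul]
  refine (hasDerivAt_intervalIntegral_of_continuousOn hJ
    (f := fun s x => derivWithin (g s) (Icc 0 L) x * derivWithin (g s) (Icc 0 L) x +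
      c * (hadamardQuotient L (g s) x * hadamardQuotient L (g s) x))
    (f' := fun s x => 2 * (derivWithin (g s) (Icc 0 L) x * derivWithin (w s) (Icc 0 L) x +
      c * (hadamardQuotient L (g s) x * hadamardQuotient L (w s) x)))
    (fun s hs => ?_) ?_ (fun s hs x hx => ?_) ht).congr_of_eventuallyEq ?_
  · rw [uIcc_of_le hL.le]
    have hgxs := (contDiffOn_slice hg1 hs).continuousOn_derivWithin hK le_rfl
    have hgqs := continuousOn_hadamardQuotient hgxs
    exact (hgxs.mul hgxs).add (continuousOn_const.mul (hgqs.mul hgqs))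
  · rw [uIcc_of_le hL.le]
    exact continuousOn_const.mul ((hgx.mul hwx).add (continuousOn_const.mul (hgq.mul hwq)))
  · rw [uIoc_of_le hL.le] at hx
    have hclosure : x ∈ closure (interior (Icc 0 L)) := by
      rw [interior_Icc, closure_Ioo hL.ne]
      exact Ioc_subset_Icc_self hx
    have hspace := hasDerivAt_derivWithin_space hJ hK hg hs (Ioc_subset_Icc_self hx) hclosure
    have hquot := hasDerivAt_hadamardQuotient hJ hg hg0 hs hx
    exact ((hspace.mul hspace).add ((hquot.mul hquot).const_mul c)).congr_deriv (by ring)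
  · filter_upwards [hJ.mem_nhds ht] with s hs
    exact hardyForm_eq_integral_hadamardQuotient c hL.le (contDiffOn_slice hg1 hs)
      (contDiffOn_slice hg1 hs) (hg0 s hs) (hg0 s hs)

end TimeDerivative

section CrossProduct

variable {L t : ℝ} {J : Set ℝ} {a : ℝ → ℝ} {g : ℝ → ℝ → ℝ}

lemma hasDerivAt_hardyEnergy {a' : ℝ} (c : ℝ) (hL : 0 < L) (hJ : IsOpen J) (ht : t ∈ J)
    (ha : HasDerivAt a a' t) (hg : ContDiffOn ℝ 2 (Function.uncurry g) (J ×ˢ Icc 0 L))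
    (hg0 : ∀ s ∈ J, g s 0 = 0) :
    HasDerivAt (fun s => hardyEnergy c L (a s) (g s))
      (2 * hardyForm c L (g t) (fun x => deriv (fun s => g s x) t) +
        (a' * (∫ x in (0 : ℝ)..L, g t x ^ 2) +
          a t * (2 * ∫ x in (0 : ℝ)..L, g t x * deriv (fun s => g s x) t))) t := by
  have hg1 : ContDiffOn ℝ 1 (Function.uncurry g) (J ×ˢ Icc 0 L) := hg.of_le one_le_two
  refine ((hasDerivAt_hardyForm_self c hL hJ hg hg0 ht).add
    (ha.mul (hasDerivAt_integral_sq hL hJ hg1 ht))).congr_of_eventuallyEq ?_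
  filter_upwards [hJ.mem_nhds ht] with s hs
  exact hardyEnergy_eq_hardyForm_add c (a s) hL (contDiffOn_slice hg1 hs) (hg0 s hs)

theorem carleman_cross_product_identity_general (c θ : ℝ) (hL : 0 < L) (hJ : IsOpen J)
    (ht : t ∈ J) (ha : HasDerivAt a (-4 * θ * a t) t)
    (hg : ContDiffOn ℝ 2 (Function.uncurry g) (J ×ˢ Icc 0 L))
    (hg0 : ∀ s ∈ J, g s 0 = 0) (hgL : ∀ s ∈ J, g s L = 0) :
    DifferentiableAt ℝ (fun s => hardyEnergy c L (a s) (g s)) t ∧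
      ∫ x in (0 : ℝ)..L, (hardyOperator c L (g t) x + a t * g t x) *
          (deriv (fun s => g s x) t + θ * dilationGenerator L (g t) x) =
        1 / 2 * deriv (fun s => hardyEnergy c L (a s) (g s)) t +
          2 * θ * hardyEnergy c L (a t) (g t) -
          θ * L * derivWithin (g t) (Icc 0 L) L ^ 2 := by
  have henergy := hasDerivAt_hardyEnergy c hL hJ ht ha hg hg0
  have hgt := contDiffOn_deriv_time (m := 1) hJ (uniqueDiffOn_Icc hL) hg (by norm_num)
  have hg2 : ContDiffOn ℝ 2 (g t) (Icc 0 L) := contDiffOn_slice hg ht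
  refine ⟨henergy.differentiableAt, ?_⟩
  rw [henergy.deriv, hardyEnergy_eq_hardyForm_add c _ hL (hg2.of_le one_le_two) (hg0 t ht),
    integral_hardyOperator_add_mul_add_dilationGenerator c (a t) θ hL hg2
      (contDiffOn_slice hgt ht) (hg0 t ht) (hgL t ht) (deriv_time_eq_zero hJ hg0 ht)
      (deriv_time_eq_zero hJ hgL ht)]
  ring

end CrossProduct

section CothWeight

variable {ξ t : ℝ}

lemma hasDerivAt_theta (hξt : ξ * t ≠ 0) :
    HasDerivAt (theta ξ) (2 * (ξ ^ 2 - theta ξ t ^ 2)) t := by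
  have hsinh : sinh (2 * ξ * t) ≠ 0 := by
    rwa [sinh_ne_zero, mul_assoc, mul_ne_zero_iff_left two_ne_zero]
  have hlinear : HasDerivAt (fun t : ℝ => 2 * ξ * t) (2 * ξ) t := by
    simpa using (hasDerivAt_id t).const_mul (2 * ξ)
  unfold theta
  refine ((hlinear.cosh.div hlinear.sinh hsinh).const_mul ξ).congr_deriv ?_
  generalize 2 * ξ * t = z at hsinh ⊢
  field_simp

lemma hasDerivAt_deriv_theta (hξt : ξ * t ≠ 0) :
    HasDerivAt (deriv (theta ξ)) (-4 * theta ξ t * deriv (theta ξ) t) t := by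
  have hθ := hasDerivAt_theta hξt
  have hriccati : deriv (theta ξ) =ᶠ[nhds t] fun s => 2 * (ξ ^ 2 - theta ξ s ^ 2) := by
    filter_upwards [(continuous_const.mul continuous_id).continuousAt.eventually_ne hξt] with s hs
    exact (hasDerivAt_theta hs).deriv
  refine (((hθ.pow 2).const_sub (ξ ^ 2)).const_mul 2).congr_of_eventuallyEq hriccati
    |>.congr_deriv ?_
  rw [hθ.deriv]
  ring

end CothWeight

lemma P1_eq (ν L ξ : ℝ) (g : ℝ → ℝ → ℝ) (t x : ℝ) :
    P1 ν L ξ g t x = hardyOperator (ν ^ 2 - 1 / 4) L (g t) x +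
      L ^ 2 / 2 * deriv (theta ξ) t * g t x := by
  rw [P1, hardyOperator]
  ring

lemma P2_eq (L ξ : ℝ) (g : ℝ → ℝ → ℝ) (t x : ℝ) :
    P2 L ξ g t x = deriv (fun s => g s x) t + theta ξ t * dilationGenerator L (g t) x := by
  rw [P2, dilationGenerator]
  ring

lemma Dfun_eq (ν L ξ : ℝ) (g : ℝ → ℝ → ℝ) :
    Dfun ν L ξ g =
      fun t => hardyEnergy (ν ^ 2 - 1 / 4) L (L ^ 2 / 2 * deriv (theta ξ) t) (g t) :=
  rfl

/-- For `g` smooth on `(0,T) × [0,L]` vanishing at `x = 0` and `x = L`, the function `D`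
is differentiable on `(0,T)` and the cross product of `P₁g` and `P₂g` satisfies
`∫₀^L P₁g · P₂g dx = (1/2) D'(t) + 2θ(t) D(t) − θ(t) L (∂_x g(t,L))²`. -/
theorem carleman_cross_product_identity (ν L T ξ : ℝ) (hν : 0 < ν) (hL : 0 < L) (hT : 0 < T)
    (hξ : 0 < ξ) (g : ℝ → ℝ → ℝ)
    (hg : ContDiffOn ℝ (⊤ : ℕ∞) (fun p : ℝ × ℝ => g p.1 p.2) (Set.Ioo 0 T ×ˢ Set.Icc 0 L))
    (hg0 : ∀ t ∈ Set.Ioo (0 : ℝ) T, g t 0 = 0)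
    (hgL : ∀ t ∈ Set.Ioo (0 : ℝ) T, g t L = 0) :
    (∀ t ∈ Set.Ioo (0 : ℝ) T, DifferentiableAt ℝ (Dfun ν L ξ g) t) ∧
    (∀ t ∈ Set.Ioo (0 : ℝ) T,
      ∫ x in (0 : ℝ)..L, P1 ν L ξ g t x * P2 L ξ g t x
        = 1 / 2 * deriv (Dfun ν L ξ g) t + 2 * theta ξ t * Dfun ν L ξ g t
          - theta ξ t * L * (derivWithin (fun y => g t y) (Set.Icc 0 L) L) ^ 2) := by
  simp only [← forall₂_and, P1_eq, P2_eq, Dfun_eq]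
  intro t ht
  have ha : HasDerivAt (fun s => L ^ 2 / 2 * deriv (theta ξ) s)
      (-4 * theta ξ t * (L ^ 2 / 2 * deriv (theta ξ) t)) t :=
    ((hasDerivAt_deriv_theta (mul_pos hξ ht.1).ne').const_mul _).congr_deriv (by ring)
  exact carleman_cross_product_identity_general _ _ hL isOpen_Ioo ht ha
    (contDiffOn_infty.1 hg 2) hg0 hgL
end

section
/- Let ν > 0, γ ≥ 1 and L > 0, and set μ̄ := R(1, (0,∞)). Then for every ε > 0 there exists ξ₀ > 0 such that for every ξ ≥ ξ₀, R(ξ, (0,L)) ≤ (1 + ε)(μ̄ + ε) ξ^{2/(1+γ)}, where R(ξ, I) denotes the Rayleigh infimum defined in the context. -/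
/-!
The `L²`-normalized dilation `u ↦ √l * u (l * ·)` multiplies the kinetic term and the inverse-square
potential by `l²`, and it does the same to the confining term when `ξ` becomes `l ^ (1 + γ) * ξ`.
With `l = ξ ^ (1 / (1 + γ))` this gives the exact identity
`R(ξ, (0, L)) = ξ ^ (2 / (1 + γ)) * R(1, (0, ξ ^ (1 / (1 + γ)) * L))`. The interval on the right
exhausts `(0, ∞)` as `ξ → ∞`, and an almost minimizing test function on `(0, ∞)`, having compact
support, is eventually admissible. Hardy's inequality makes all the infima nonnegative.
-/

open MeasureTheory Real Set

/-- Rayleigh infimum of the quadratic form of `−∂_x² + ξ²x^{2γ} + (ν²−1/4)/x²` over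
smooth compactly supported functions in `I` normalized in `L²(I)`. -/
noncomputable def rayleigh (ν γ ξ : ℝ) (I : Set ℝ) : ℝ :=
  sInf { r : ℝ | ∃ u : ℝ → ℝ, ContDiff ℝ (⊤ : ℕ∞) u ∧ HasCompactSupport u ∧ tsupport u ⊆ I ∧
    (∫ x in I, (u x) ^ 2) = 1 ∧
    r = ∫ x in I, ((deriv u x) ^ 2
          + (ξ ^ 2 * x ^ (2 * γ) + (ν ^ 2 - 1 / 4) / x ^ 2) * (u x) ^ 2) }

open Filter Topology
open scoped Pointwise

section CompactSupport

variable {X : Type*} [TopologicalSpace X]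

lemma tsupport_fun_pow {M : Type*} [MonoidWithZero M] [NoZeroDivisors M] (f : X → M) {n : ℕ}
    (hn : n ≠ 0) : tsupport (fun x ↦ f x ^ n) = tsupport f := by
  rw [tsupport, tsupport, Function.support_pow f hn]

lemma hasCompactSupport_fun_pow {M : Type*} [MonoidWithZero M] [NoZeroDivisors M] {f : X → M}
    (hf : HasCompactSupport f) {n : ℕ} (hn : n ≠ 0) : HasCompactSupport fun x ↦ f x ^ n := by
  rwa [HasCompactSupport, tsupport_fun_pow f hn]

variable [T2Space X] [MeasurableSpace X] [OpensMeasurableSpace X] {μ : Measure X}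
  [IsFiniteMeasureOnCompacts μ] {w f : X → ℝ}

lemma integrable_mul_of_continuousOn_tsupport (hf : Continuous f) (hf_supp : HasCompactSupport f)
    (hw : ContinuousOn w (tsupport f)) : Integrable (fun x ↦ w x * f x) μ := by
  have hsub : (Function.support fun x ↦ w x * f x) ⊆ tsupport f :=
    (Function.support_mul_subset_right w f).trans (subset_tsupport f)
  exact (integrableOn_iff_integrable_of_support_subset hsub).1
    ((hw.mul hf.continuousOn).integrableOn_compact hf_supp)

lemma integrable_mul_sq_of_continuousOn_tsupport (hf : Continuous f) (hf_supp : HasCompactSupport f)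
    (hw : ContinuousOn w (tsupport f)) : Integrable (fun x ↦ w x * f x ^ 2) μ :=
  integrable_mul_of_continuousOn_tsupport (hf.pow 2) (hasCompactSupport_fun_pow hf_supp two_ne_zero)
    (by rwa [tsupport_fun_pow f two_ne_zero])

lemma integrable_deriv_sq {u : ℝ → ℝ} (hu : ContDiff ℝ 1 u) (hu_supp : HasCompactSupport u) :
    Integrable fun x ↦ deriv u x ^ 2 :=
  ((hu.continuous_deriv le_rfl).pow 2).integrable_of_hasCompactSupport
    (hasCompactSupport_fun_pow hu_supp.deriv two_ne_zero)

end CompactSupport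

section Hardy

variable {u : ℝ → ℝ}

lemma integrable_inv_sq_mul_sq (hu : Continuous u) (hu_supp : HasCompactSupport u)
    (h0 : 0 ∉ tsupport u) : Integrable fun x ↦ (x ^ 2)⁻¹ * u x ^ 2 :=
  integrable_mul_sq_of_continuousOn_tsupport hu hu_supp <|
    (continuousOn_id.pow 2).inv₀ fun _ hx ↦ pow_ne_zero 2 (ne_of_mem_of_not_mem hx h0)

lemma integrable_inv_mul_deriv_sq (hu : ContDiff ℝ 1 u) (hu_supp : HasCompactSupport u)
    (h0 : 0 ∉ tsupport u) : Integrable fun x ↦ x⁻¹ * (2 * u x * deriv u x) := by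
  have hu' := hu.continuous_deriv le_rfl
  have h := integrable_mul_of_continuousOn_tsupport (μ := volume)
    (w := fun x ↦ x⁻¹ * (2 * deriv u x)) hu.continuous hu_supp <|
      (continuousOn_inv₀.mono fun _ hx ↦ ne_of_mem_of_not_mem hx h0).mul
        (continuous_const.mul hu').continuousOn
  exact h.congr (.of_forall fun x ↦ by ring)

lemma integral_inv_mul_deriv_sq (hu : ContDiff ℝ 1 u) (hu_supp : HasCompactSupport u)
    (h0 : 0 ∉ tsupport u) :
    ∫ x, x⁻¹ * (2 * u x * deriv u x) = ∫ x, (x ^ 2)⁻¹ * u x ^ 2 := by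
  have h_inv : ∀ x ∈ tsupport (fun x ↦ u x ^ 2), HasDerivAt (·⁻¹) (-(x ^ 2)⁻¹) x := fun x hx ↦
    hasDerivAt_inv (ne_of_mem_of_not_mem (tsupport_fun_pow u two_ne_zero ▸ hx) h0)
  have h_sq (x : ℝ) : HasDerivAt (fun x ↦ u x ^ 2) (2 * u x * deriv u x) x := by
    simpa using (hu.differentiable one_ne_zero x).hasDerivAt.fun_pow 2
  rw [integral_mul_deriv_eq_deriv_mul_of_integrable h_inv (fun x _ ↦ h_sq x)
    (integrable_inv_mul_deriv_sq hu hu_supp h0)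
    ((integrable_inv_sq_mul_sq hu.continuous hu_supp h0).neg.congr (.of_forall fun x ↦ by simp))
    (integrable_mul_sq_of_continuousOn_tsupport hu.continuous hu_supp <|
      continuousOn_inv₀.mono fun _ hx ↦ ne_of_mem_of_not_mem hx h0), ← integral_neg]
  simp only [neg_mul, neg_neg]

theorem hardy_inequality (hu : ContDiff ℝ 1 u) (hu_supp : HasCompactSupport u)
    (h0 : 0 ∉ tsupport u) :
    ∫ x, (x ^ 2)⁻¹ * u x ^ 2 ≤ 4 * ∫ x, deriv u x ^ 2 := by
  have h_deriv := integrable_deriv_sq hu hu_supp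
  have h_cross := integrable_inv_mul_deriv_sq hu hu_supp h0
  have h_sq := integrable_inv_sq_mul_sq hu.continuous hu_supp h0
  have h_diff : Integrable fun x ↦ 4 * deriv u x ^ 2 - 2 * (x⁻¹ * (2 * u x * deriv u x)) :=
    (h_deriv.const_mul 4).sub (h_cross.const_mul 2)
  have h_square : 0 ≤ ∫ x, (2 * deriv u x - x⁻¹ * u x) ^ 2 :=
    integral_nonneg fun x ↦ sq_nonneg _
  have h_expand : ∫ x, (2 * deriv u x - x⁻¹ * u x) ^ 2 =
      4 * (∫ x, deriv u x ^ 2) - 2 * (∫ x, x⁻¹ * (2 * u x * deriv u x))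
        + ∫ x, (x ^ 2)⁻¹ * u x ^ 2 := by
    rw [← integral_const_mul, ← integral_const_mul,
      ← integral_sub (h_deriv.const_mul 4) (h_cross.const_mul 2), ← integral_add h_diff h_sq]
    congr with x
    ring
  linarith [integral_inv_mul_deriv_sq hu hu_supp h0]

end Hardy

section Rayleigh

variable {ν γ ξ l : ℝ} {I J : Set ℝ} {u : ℝ → ℝ}

/-- The quadratic form of `−∂_x² + ξ²x^{2γ} + (ν² − 1/4)/x²`. The integral runs over `ℝ` instead of
`I`, so that the form does not depend on the interval in which `u` is supported. -/
noncomputable def rayleighForm (ν γ ξ : ℝ) (u : ℝ → ℝ) : ℝ :=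
  ∫ x, (deriv u x ^ 2 + (ξ ^ 2 * x ^ (2 * γ) + (ν ^ 2 - 1 / 4) / x ^ 2) * u x ^ 2)

/-- The admissible functions of the Rayleigh infimum over `I`: smooth, compactly supported in `I`
and normalized in `L²`. -/
structure IsNormalizedTestFunction (I : Set ℝ) (u : ℝ → ℝ) : Prop where
  contDiff : ContDiff ℝ (⊤ : ℕ∞) u
  hasCompactSupport : HasCompactSupport u
  tsupport_subset : tsupport u ⊆ I
  integral_sq : ∫ x, u x ^ 2 = 1

lemma IsNormalizedTestFunction.of_tsupport_subset (hu : IsNormalizedTestFunction I u)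
    (h : tsupport u ⊆ J) : IsNormalizedTestFunction J u :=
  { hu with tsupport_subset := h }

lemma setIntegral_sq_eq_integral (hu : tsupport u ⊆ I) :
    ∫ x in I, u x ^ 2 = ∫ x, u x ^ 2 :=
  setIntegral_eq_integral_of_forall_compl_eq_zero fun x hx ↦ by
    simp [image_eq_zero_of_notMem_tsupport fun h ↦ hx (hu h)]

lemma setIntegral_eq_rayleighForm (hu : tsupport u ⊆ I) :
    ∫ x in I, (deriv u x ^ 2 + (ξ ^ 2 * x ^ (2 * γ) + (ν ^ 2 - 1 / 4) / x ^ 2) * u x ^ 2) =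
      rayleighForm ν γ ξ u :=
  setIntegral_eq_integral_of_forall_compl_eq_zero fun x hx ↦ by
    have hx' : x ∉ tsupport u := fun h ↦ hx (hu h)
    simp [image_eq_zero_of_notMem_tsupport hx', deriv_of_notMem_tsupport hx']

lemma rayleigh_eq_sInf_image (ν γ ξ : ℝ) (I : Set ℝ) :
    rayleigh ν γ ξ I = sInf (rayleighForm ν γ ξ '' {u | IsNormalizedTestFunction I u}) := by
  rw [rayleigh]
  congr 1 with r
  constructor
  · rintro ⟨u, hu, hu_supp, huI, hu_sq, rfl⟩
    exact ⟨u, ⟨hu, hu_supp, huI, setIntegral_sq_eq_integral huI ▸ hu_sq⟩,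
      (setIntegral_eq_rayleighForm huI).symm⟩
  · rintro ⟨u, ⟨hu, hu_supp, huI, hu_sq⟩, rfl⟩
    exact ⟨u, hu, hu_supp, huI, (setIntegral_sq_eq_integral huI).trans hu_sq,
      (setIntegral_eq_rayleighForm huI).symm⟩

lemma exists_isNormalizedTestFunction (hI : (interior I).Nonempty) :
    ∃ u, IsNormalizedTestFunction I u := by
  obtain ⟨x₀, hx₀⟩ := hI
  obtain ⟨f, hfI, hf_supp, hf, -, hfx₀⟩ :=
    exists_contDiff_tsupport_subset (n := ⊤) (mem_interior_iff_mem_nhds.1 hx₀)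
  have hpos : 0 < ∫ x, f x ^ 2 :=
    (hf.continuous.pow 2).integral_pos_of_hasCompactSupport_nonneg_nonzero
      (hasCompactSupport_fun_pow hf_supp two_ne_zero) (fun x ↦ sq_nonneg _)
      (x := x₀) (by simp [hfx₀])
  refine ⟨fun x ↦ (√(∫ x, f x ^ 2))⁻¹ * f x, contDiff_const.mul hf, hf_supp.mul_left,
    (tsupport_mul_subset_right (f := fun _ ↦ _)).trans hfI, ?_⟩
  simp only [mul_pow, inv_pow, sq_sqrt hpos.le, integral_const_mul]
  exact inv_mul_cancel₀ hpos.ne'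

lemma rayleighForm_nonneg (hu : ContDiff ℝ 1 u) (hu_supp : HasCompactSupport u)
    (hu_pos : tsupport u ⊆ Ioi 0) : 0 ≤ rayleighForm ν γ ξ u := by
  have h0 : 0 ∉ tsupport u := fun h ↦ self_notMem_Ioi (hu_pos h)
  have h_deriv := integrable_deriv_sq hu hu_supp
  have h_hardy := (integrable_inv_sq_mul_sq hu.continuous hu_supp h0).const_mul (1 / 4)
  have h_pot : Integrable fun x ↦
      (ξ ^ 2 * x ^ (2 * γ) + (ν ^ 2 - 1 / 4) / x ^ 2) * u x ^ 2 := by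
    refine integrable_mul_sq_of_continuousOn_tsupport hu.continuous hu_supp fun x hx ↦ ?_
    have hx0 : x ≠ 0 := ne_of_mem_of_not_mem hx h0
    fun_prop (disch := simp [hx0])
  calc 0 ≤ (∫ x, deriv u x ^ 2) - 1 / 4 * ∫ x, (x ^ 2)⁻¹ * u x ^ 2 := by
        linarith [hardy_inequality hu hu_supp h0]
    _ = ∫ x, (deriv u x ^ 2 - 1 / 4 * ((x ^ 2)⁻¹ * u x ^ 2)) := by
        rw [integral_sub h_deriv h_hardy, integral_const_mul]
    _ ≤ rayleighForm ν γ ξ u := integral_mono (h_deriv.sub h_hardy) (h_deriv.add h_pot) fun x ↦ ?_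
  by_cases hx : x ∈ tsupport u
  · have hx_pos : 0 < x := hu_pos hx
    have : 0 ≤ (ξ ^ 2 * x ^ (2 * γ) + ν ^ 2 / x ^ 2) * u x ^ 2 := by positivity
    simp only
    linear_combination this
  · simp [image_eq_zero_of_notMem_tsupport hx]

lemma IsNormalizedTestFunction.rayleighForm_nonneg (hu : IsNormalizedTestFunction I u)
    (hI : I ⊆ Ioi 0) : 0 ≤ rayleighForm ν γ ξ u :=
  _root_.rayleighForm_nonneg (hu.contDiff.of_le (by simp)) hu.hasCompactSupport
    (hu.tsupport_subset.trans hI)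

lemma rayleigh_nonneg (hI : I ⊆ Ioi 0) : 0 ≤ rayleigh ν γ ξ I := by
  rw [rayleigh_eq_sInf_image]
  exact Real.sInf_nonneg (forall_mem_image.2 fun u hu ↦ hu.rayleighForm_nonneg hI)

lemma rayleigh_le_rayleighForm (hI : I ⊆ Ioi 0) (hu : IsNormalizedTestFunction I u) :
    rayleigh ν γ ξ I ≤ rayleighForm ν γ ξ u := by
  rw [rayleigh_eq_sInf_image]
  exact csInf_le ⟨0, forall_mem_image.2 fun v hv ↦ hv.rayleighForm_nonneg hI⟩
    (mem_image_of_mem _ hu)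

lemma exists_rayleighForm_lt (hI : (interior I).Nonempty) {r : ℝ} (hr : rayleigh ν γ ξ I < r) :
    ∃ u, IsNormalizedTestFunction I u ∧ rayleighForm ν γ ξ u < r := by
  rw [rayleigh_eq_sInf_image] at hr
  exact exists_mem_image.1
    (exists_lt_of_csInf_lt (Set.Nonempty.image _ (exists_isNormalizedTestFunction hI)) hr)

lemma eventually_rayleigh_Ioo_lt {r : ℝ} (hr : rayleigh ν γ ξ (Ioi 0) < r) :
    ∀ᶠ M in atTop, rayleigh ν γ ξ (Ioo 0 M) < r := by
  obtain ⟨u, hu, hur⟩ := exists_rayleighForm_lt (by simp) hr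
  obtain ⟨B, hB⟩ := hu.hasCompactSupport.isCompact.bddAbove
  filter_upwards [eventually_gt_atTop B] with M hM
  have huM : IsNormalizedTestFunction (Ioo 0 M) u :=
    hu.of_tsupport_subset fun x hx ↦ ⟨hu.tsupport_subset hx, (hB hx).trans_lt hM⟩
  exact (rayleigh_le_rayleighForm Ioo_subset_Ioi_self huM).trans_lt hur

/-- The dilation by `l`, scaled so as to preserve the `L²` norm. -/
noncomputable def l2Dilation (l : ℝ) (u : ℝ → ℝ) (x : ℝ) : ℝ :=
  √l * u (l * x)

lemma deriv_l2Dilation (l : ℝ) (u : ℝ → ℝ) (x : ℝ) :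
    deriv (l2Dilation l u) x = √l * (l * deriv u (l * x)) := by
  unfold l2Dilation
  rw [deriv_const_mul_field, deriv_comp_mul_left, smul_eq_mul]

lemma tsupport_l2Dilation_subset (l : ℝ) (u : ℝ → ℝ) :
    tsupport (l2Dilation l u) ⊆ (l * ·) ⁻¹' tsupport u :=
  (tsupport_mul_subset_right (f := fun _ ↦ √l)).trans
    (tsupport_comp_subset_preimage u (continuous_const_mul l))

lemma integral_l2Dilation_sq (hl : 0 < l) (u : ℝ → ℝ) :
    ∫ x, l2Dilation l u x ^ 2 = ∫ x, u x ^ 2 := by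
  simp only [l2Dilation, mul_pow, sq_sqrt hl.le, integral_const_mul]
  rw [Measure.integral_comp_mul_left (fun x ↦ u x ^ 2), abs_of_pos (inv_pos.2 hl), smul_eq_mul,
    mul_inv_cancel_left₀ hl.ne']

lemma IsNormalizedTestFunction.l2Dilation (hl : 0 < l) (hu : IsNormalizedTestFunction I u) :
    IsNormalizedTestFunction ((l * ·) ⁻¹' I) (l2Dilation l u) where
  contDiff := contDiff_const.mul (hu.contDiff.comp (contDiff_const.mul contDiff_id))
  hasCompactSupport := (hu.hasCompactSupport.comp_smul hl.ne').mul_left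
  tsupport_subset := (tsupport_l2Dilation_subset l u).trans (preimage_mono hu.tsupport_subset)
  integral_sq := (integral_l2Dilation_sq hl u).trans hu.integral_sq

lemma rayleighForm_l2Dilation (hl : 0 < l) (hu : tsupport u ⊆ Ioi 0) :
    rayleighForm ν γ (l ^ (1 + γ) * ξ) (l2Dilation l u) = l ^ 2 * rayleighForm ν γ ξ u := by
  let density (x : ℝ) : ℝ :=
    deriv u x ^ 2 + (ξ ^ 2 * x ^ (2 * γ) + (ν ^ 2 - 1 / 4) / x ^ 2) * u x ^ 2
  have h_coupling : (l ^ (1 + γ)) ^ 2 = l ^ 2 * l ^ (2 * γ) := by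
    rw [rpow_add hl, rpow_one, mul_pow, mul_comm 2 γ, rpow_mul hl.le, rpow_two]
  have h_density (x : ℝ) : deriv (l2Dilation l u) x ^ 2 +
      ((l ^ (1 + γ) * ξ) ^ 2 * x ^ (2 * γ) + (ν ^ 2 - 1 / 4) / x ^ 2) * l2Dilation l u x ^ 2 =
        l ^ 3 * density (l * x) := by
    simp only [density, deriv_l2Dilation, l2Dilation, mul_pow, sq_sqrt hl.le, h_coupling]
    by_cases hx : l * x ∈ tsupport u
    · have hx_pos : 0 < x := pos_of_mul_pos_right (hu hx) hl.le
      rw [mul_rpow hl.le hx_pos.le]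
      field_simp
    · rw [image_eq_zero_of_notMem_tsupport hx]
      ring
  calc rayleighForm ν γ (l ^ (1 + γ) * ξ) (l2Dilation l u)
      = l ^ 3 * ∫ x, density (l * x) := by
        simp only [rayleighForm, h_density, integral_const_mul]
    _ = l ^ 3 * (l⁻¹ * rayleighForm ν γ ξ u) := by
        rw [Measure.integral_comp_mul_left density, abs_of_pos (inv_pos.2 hl), smul_eq_mul]
        rfl
    _ = l ^ 2 * rayleighForm ν γ ξ u := by field_simp

lemma smul_image_rayleighForm_subset (hl : 0 < l) (hI : I ⊆ Ioi 0) :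
    l ^ 2 • (rayleighForm ν γ ξ '' {u | IsNormalizedTestFunction I u}) ⊆
      rayleighForm ν γ (l ^ (1 + γ) * ξ) '' {u | IsNormalizedTestFunction ((l * ·) ⁻¹' I) u} := by
  rintro _ ⟨_, ⟨u, hu, rfl⟩, rfl⟩
  exact ⟨l2Dilation l u, hu.l2Dilation hl,
    rayleighForm_l2Dilation hl (hu.tsupport_subset.trans hI)⟩

theorem rayleigh_preimage_mul_left (hl : 0 < l) (hI : I ⊆ Ioi 0) :
    rayleigh ν γ (l ^ (1 + γ) * ξ) ((l * ·) ⁻¹' I) = l ^ 2 * rayleigh ν γ ξ I := by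
  rw [rayleigh_eq_sInf_image, rayleigh_eq_sInf_image, ← smul_eq_mul (l ^ 2),
    ← Real.sInf_smul_of_nonneg (sq_nonneg l)]
  congr 1
  refine Subset.antisymm ?_ (smul_image_rayleighForm_subset hl hI)
  rw [subset_smul_set_iff₀ (pow_ne_zero 2 hl.ne')]
  have hI' : (l * ·) ⁻¹' I ⊆ Ioi 0 := fun x hx ↦ pos_of_mul_pos_right (hI hx) hl.le
  have h := smul_image_rayleighForm_subset (ν := ν) (γ := γ) (ξ := l ^ (1 + γ) * ξ)
    (inv_pos.2 hl) hI'
  simpa [preimage_preimage, inv_rpow hl.le, hl.ne', (rpow_pos_of_pos hl _).ne'] using h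

theorem rayleigh_Ioo_eq_rpow_mul (hγ : 1 + γ ≠ 0) (hξ : 0 < ξ) (L : ℝ) :
    rayleigh ν γ ξ (Ioo 0 L) =
      ξ ^ (2 / (1 + γ)) * rayleigh ν γ 1 (Ioo 0 (ξ ^ (1 + γ)⁻¹ * L)) := by
  have hl : 0 < ξ ^ (1 + γ)⁻¹ := rpow_pos_of_pos hξ _
  have h := rayleigh_preimage_mul_left (ν := ν) (γ := γ) (ξ := 1) hl
    (Ioo_subset_Ioi_self (b := 0) (a := ξ ^ (1 + γ)⁻¹ * L))
  rwa [preimage_const_mul_Ioo₀ _ _ hl, zero_div, mul_div_cancel_left₀ L hl.ne', mul_one,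
    rpow_inv_rpow hξ.le hγ, ← rpow_mul_natCast hξ.le, Nat.cast_two, inv_mul_eq_div] at h

end Rayleigh

theorem rayleigh_upper_bound_general (ν γ L : ℝ) (hγ : -1 < γ) (hL : 0 < L) :
    ∀ ε > (0 : ℝ), ∃ ξ₀ > (0 : ℝ), ∀ ξ ≥ ξ₀,
      rayleigh ν γ ξ (Ioo 0 L) ≤ (rayleigh ν γ 1 (Ioi 0) + ε) * ξ ^ ((2 : ℝ) / (1 + γ)) := by
  intro ε hε
  have hγ' : 0 < 1 + γ := by linarith
  have h_length : Tendsto (fun ξ : ℝ ↦ ξ ^ (1 + γ)⁻¹ * L) atTop atTop :=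
    (tendsto_rpow_atTop (inv_pos.2 hγ')).atTop_mul_const hL
  have h_lt : ∀ᶠ ξ in atTop,
      rayleigh ν γ 1 (Ioo 0 (ξ ^ (1 + γ)⁻¹ * L)) < rayleigh ν γ 1 (Ioi 0) + ε :=
    h_length.eventually (eventually_rayleigh_Ioo_lt (lt_add_of_pos_right _ hε))
  obtain ⟨ξ₀, hξ₀_lt, hξ₀⟩ :=
    ((eventually_forall_ge_atTop.2 h_lt).and (eventually_gt_atTop 0)).exists
  refine ⟨ξ₀, hξ₀, fun ξ hξ ↦ ?_⟩
  have hξ_pos : 0 < ξ := hξ₀.trans_le hξ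
  rw [rayleigh_Ioo_eq_rpow_mul hγ'.ne' hξ_pos, mul_comm]
  gcongr
  exact (hξ₀_lt ξ hξ).le

/-- Upper bound on the first eigenvalue: with `μ̄ = R(1,(0,∞))`, for every `ε > 0` there is
`ξ₀ > 0` such that for every `ξ ≥ ξ₀`, `R(ξ,(0,L)) ≤ (1+ε)(μ̄+ε) ξ^{2/(1+γ)}`. -/
theorem rayleigh_upper_bound (ν γ L : ℝ) (hν : 0 < ν) (hγ : 1 ≤ γ) (hL : 0 < L) :
    ∀ ε > (0 : ℝ), ∃ ξ₀ > (0 : ℝ), ∀ ξ ≥ ξ₀,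
      rayleigh ν γ ξ (Set.Ioo 0 L)
        ≤ (1 + ε) * (rayleigh ν γ 1 (Set.Ioi 0) + ε) * ξ ^ ((2 : ℝ) / (1 + γ)) := by
  intro ε hε
  obtain ⟨ξ₀, hξ₀, h⟩ := rayleigh_upper_bound_general ν γ L (by linarith) hL ε hε
  have h_nonneg : 0 ≤ rayleigh ν γ 1 (Ioi 0) := rayleigh_nonneg Subset.rfl
  refine ⟨ξ₀, hξ₀, fun ξ hξ ↦ (h ξ hξ).trans ?_⟩
  have hξ_pos : 0 < ξ := hξ₀.trans_le hξ
  gcongr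
  exact le_mul_of_one_le_left (by positivity) (by linarith)
end
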